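/- arXiv:math/0007191 — 2 statements merged into one kernel-verified Lean document; each statement's English description precedes it below -/
import Mathlib

section
/- For any λ ∈ K^I and α ∈ ℕ^I, the ring of invariants K[μ_α^{-1}(λ)]^{G(α)} is generated, as a K-algebra, by the restrictions to μ_α^{-1}(λ) of the trace functions tr_p, where p = a_1…a_ℓ runs through the oriented cycles in the double quiver Q̄ and tr_p(x) = tr(x_{a_1}⋯x_{a_ℓ}). -/
open scoped BigOperators

noncomputable section

/-- A quiver with a finite vertex set `I` and a finite arrow set `A`;
`h a` and `t a` are the head and the tail of the arrow `a`. -/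
structure FinQuiver where
  I : Type
  [fintypeI : Fintype I]
  [decEqI : DecidableEq I]
  A : Type
  [fintypeA : Fintype A]
  h : A → I
  t : A → I

attribute [instance] FinQuiver.fintypeI FinQuiver.decEqI FinQuiver.fintypeA

namespace FinQuiver

variable (Q : FinQuiver)

/-- Arrows of the double quiver `Q̄` : every arrow `a : i → j` of `Q` (as `Sum.inl a`)
together with a reverse arrow `a* : j → i` (as `Sum.inr a`). -/
@[reducible] def DA : Type := Q.A ⊕ Q.A

instance : Fintype Q.DA := inferInstanceAs (Fintype (Q.A ⊕ Q.A))

/-- Head of an arrow of the double quiver. -/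
@[reducible] def dh : Q.DA → Q.I := fun a => match a with
  | Sum.inl a => Q.h a
  | Sum.inr a => Q.t a

/-- Tail of an arrow of the double quiver. -/
@[reducible] def dt : Q.DA → Q.I := fun a => match a with
  | Sum.inl a => Q.t a
  | Sum.inr a => Q.h a

/-- The symmetric bilinear form
`(α,β) = ∑_{i∈I} 2 α_i β_i − ∑_{a∈Q̄} α_{h(a)} β_{t(a)}` on `ℤ^I`. -/
def bil (α β : Q.I → ℤ) : ℤ :=
  (∑ i, 2 * α i * β i) - ∑ a : Q.DA, α (Q.dh a) * β (Q.dt a)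

/-- `p(α) = 1 − q(α) = 1 − α·α + ∑_{a ∈ Q} α_{t(a)} α_{h(a)}`. -/
def pp (α : Q.I → ℤ) : ℤ :=
  1 - (∑ i, α i * α i) + ∑ a : Q.A, α (Q.t a) * α (Q.h a)

/-- The coordinate vector `ε_i` at a vertex `i`. -/
def ev (i : Q.I) : Q.I → ℤ := fun j => if j = i then 1 else 0

/-- The coordinate vector of a vertex, as a vector of natural numbers. -/
def evN (i : Q.I) : Q.I → ℕ := fun j => if j = i then 1 else 0

/-- A vertex is loopfree if no arrow has both its head and its tail there. -/
def Loopfree (i : Q.I) : Prop := ∀ a : Q.A, ¬ (Q.h a = i ∧ Q.t a = i)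

/-- The reflection `s_i(α) = α − (α,ε_i) ε_i` at a (loopfree) vertex `i`. -/
def refl (i : Q.I) (α : Q.I → ℤ) : Q.I → ℤ := α - Q.bil α (Q.ev i) • Q.ev i

/-- Two vertices are joined by some arrow. -/
def Adj (i j : Q.I) : Prop :=
  ∃ a : Q.A, (Q.h a = i ∧ Q.t a = j) ∨ (Q.h a = j ∧ Q.t a = i)

/-- The quiver is connected. -/
def Connected : Prop := ∀ i j : Q.I, Relation.ReflTransGen Q.Adj i j

/-- The support of the vector `α` is connected in `Q`. -/
def SuppConnected (α : Q.I → ℤ) : Prop :=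
  ∀ i j : Q.I, α i ≠ 0 → α j ≠ 0 →
    Relation.ReflTransGen (fun x y => α x ≠ 0 ∧ α y ≠ 0 ∧ Q.Adj x y) i j

/-- The fundamental region: nonzero nonnegative vectors with connected support
such that `(α, ε_i) ≤ 0` for every vertex `i`. -/
def InFund (α : Q.I → ℤ) : Prop :=
  α ≠ 0 ∧ (∀ i, 0 ≤ α i) ∧ Q.SuppConnected α ∧ ∀ i, Q.bil α (Q.ev i) ≤ 0

/-- The roots of the Kac root system attached to `Q` : the real roots form the orbit
of the simple roots (coordinate vectors at loopfree vertices) under the reflections at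
loopfree vertices, and the imaginary roots form the orbit of `±(fundamental region)`
under these reflections. -/
inductive IsRoot : (Q.I → ℤ) → Prop
  | simple (i : Q.I) (hi : Q.Loopfree i) : IsRoot (Q.ev i)
  | fund (α : Q.I → ℤ) (hα : Q.InFund α) : IsRoot α
  | neg_fund (α : Q.I → ℤ) (hα : Q.InFund α) : IsRoot (-α)
  | reflect (i : Q.I) (hi : Q.Loopfree i) (α : Q.I → ℤ) (hα : IsRoot α) :
      IsRoot (Q.refl i α)

/-- Positive roots: roots all of whose components are nonnegative. -/
def IsPosRoot (α : Q.I → ℤ) : Prop := Q.IsRoot α ∧ (∀ i, 0 ≤ α i) ∧ α ≠ 0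

/-- The Tits form is positive semidefinite. -/
def PosSemidef : Prop := ∀ α : Q.I → ℤ, 0 ≤ Q.bil α α

/-- The Tits form is positive definite. -/
def PosDef : Prop := Q.PosSemidef ∧ ∀ α : Q.I → ℤ, Q.bil α α = 0 → α = 0

/-- Dynkin quivers: connected, with positive definite Tits form. -/
def IsDynkin : Prop := Q.Connected ∧ Q.PosDef

/-- Extended Dynkin quivers: connected, with positive semidefinite but not
positive definite Tits form. -/
def IsExtDynkin : Prop := Q.Connected ∧ Q.PosSemidef ∧ ¬ Q.PosDef

/-- `δ` is the minimal positive imaginary root of an extended Dynkin quiver: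
the minimal nonzero nonnegative vector in the radical of the Tits form. -/
def IsMinImag (δ : Q.I → ℤ) : Prop :=
  (∀ i, 0 ≤ δ i) ∧ δ ≠ 0 ∧ (∀ i, Q.bil δ (Q.ev i) = 0) ∧
    ∀ β : Q.I → ℤ, (∀ i, 0 ≤ β i) → β ≠ 0 → (∀ i, Q.bil β (Q.ev i) = 0) →
      ∀ i, δ i ≤ β i

/-- The subquiver of `Q` on a subset `S` of vertices and a subset `B` of arrows. -/
def restrict (S : Set Q.I) (B : Set Q.A) (hh : ∀ a ∈ B, Q.h a ∈ S)
    (ht : ∀ a ∈ B, Q.t a ∈ S) : FinQuiver :=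
  { I := S
    fintypeI := Fintype.ofFinite S
    decEqI := Classical.decEq _
    A := B
    fintypeA := Fintype.ofFinite B
    h := fun a => ⟨Q.h a.1, hh a.1 a.2⟩
    t := fun a => ⟨Q.t a.1, ht a.1 a.2⟩ }

/-- The support quiver of a vector: the full subquiver on the support of `β`. -/
def suppQuiver (β : Q.I → ℤ) : FinQuiver :=
  Q.restrict {i | β i ≠ 0} {a | β (Q.h a) ≠ 0 ∧ β (Q.t a) ≠ 0}
    (fun _ ha => ha.1) (fun _ ha => ha.2)

/-- A dimension vector (of natural numbers), viewed in `ℤ^I`. -/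
def toZ (α : Q.I → ℕ) : Q.I → ℤ := fun i => (α i : ℤ)

/-- An oriented cycle in the double quiver `Q̄`, consisting of `n+1` arrows,
the tail of each arrow being the head of the (cyclically) next one. -/
structure Cyc (Q' : FinQuiver) where
  n : ℕ
  ar : Fin (n + 1) → Q'.DA
  compat : ∀ i : Fin (n + 1), Q'.dt (ar i) = Q'.dh (ar (i + 1))

section WithField

variable (K : Type) [Field K]

/-- `λ·α = ∑_i λ_i α_i`. -/
def pair (l : Q.I → K) (α : Q.I → ℤ) : K := ∑ i, l i * (α i : K)

/-- `R_λ^+`, the set of positive roots `α` with `λ·α = 0`. -/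
def Rplus (l : Q.I → K) : Set (Q.I → ℤ) :=
  {α | Q.IsPosRoot α ∧ Q.pair K l α = 0}

/-- `ℕ R_λ^+`, the set of sums (including the empty sum `0`) of elements of `R_λ^+`. -/
def NRplus (l : Q.I → K) : Set (Q.I → ℤ) :=
  (AddSubmonoid.closure (Q.Rplus K l) : AddSubmonoid (Q.I → ℤ))

/-- `Σ_λ` : the elements `α ∈ R_λ^+` with `p(α) > ∑ p(β⁽ᵗ⁾)` for every decomposition
of `α` as a sum of at least two elements `β⁽ᵗ⁾` of `R_λ^+`. -/
def SigmaSet (l : Q.I → K) : Set (Q.I → ℤ) :=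
  {α | α ∈ Q.Rplus K l ∧
    ∀ (n : ℕ) (β : Fin n → (Q.I → ℤ)), 2 ≤ n → (∀ j, β j ∈ Q.Rplus K l) →
      α = ∑ j, β j → (∑ j, Q.pp (β j)) < Q.pp α}

/-- The dual reflection `r_i(λ)_j = λ_j − (ε_i,ε_j) λ_i`. -/
def coRefl (i : Q.I) (l : Q.I → K) : Q.I → K :=
  fun j => l j - (Q.bil (Q.ev i) (Q.ev j) : ℤ) * l i

/-- A single admissible reflection applied to the pair `(λ, α)`:
a reflection at a loopfree vertex `i` with `λ_i ≠ 0`. -/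
def AdmStep (x y : (Q.I → K) × (Q.I → ℤ)) : Prop :=
  ∃ i : Q.I, Q.Loopfree i ∧ x.1 i ≠ 0 ∧ y.1 = Q.coRefl K i x.1 ∧ y.2 = Q.refl i x.2

/-- `(ν,β)` is obtained from `(λ,α)` by a sequence of admissible reflections:
the two pairs lie in the same class of the equivalence relation generated by
admissible reflections. -/
def AdmEquiv (x y : (Q.I → K) × (Q.I → ℤ)) : Prop :=
  Relation.EqvGen (Q.AdmStep K) x y

/-- The space `Rep(Q̄,α)` of representations of the double quiver. -/
def Rep (α : Q.I → ℕ) : Type :=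
  ∀ a : Q.DA, Matrix (Fin (α (Q.dh a))) (Fin (α (Q.dt a))) K

/-- The moment map
`μ_α(x)_i = ∑_{a∈Q, h(a)=i} x_a x_{a*} − ∑_{a∈Q, t(a)=i} x_{a*} x_a`. -/
def moment (α : Q.I → ℕ) (x : Q.Rep K α) (i : Q.I) :
    Matrix (Fin (α i)) (Fin (α i)) K :=
  (∑ a : Q.A, if h : Q.h a = i then
      (x (Sum.inl a) * x (Sum.inr a)).submatrix
        (Fin.cast (congrArg α h).symm) (Fin.cast (congrArg α h).symm)
    else 0)
  - ∑ a : Q.A, if h : Q.t a = i then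
      (x (Sum.inr a) * x (Sum.inl a)).submatrix
        (Fin.cast (congrArg α h).symm) (Fin.cast (congrArg α h).symm)
    else 0

/-- The fibre `μ_α^{-1}(λ)` of the moment map over (the central element
corresponding to) `λ`. -/
def MomentFiber (l : Q.I → K) (α : Q.I → ℕ) : Set (Q.Rep K α) :=
  {x | ∀ i : Q.I, Q.moment K α x i = l i • (1 : Matrix (Fin (α i)) (Fin (α i)) K)}

/-- The group `∏_i GL(α_i,K)`; it acts on `Rep(Q̄,α)` by conjugation, with the same
orbits and the same invariant functions as `G(α) = (∏_i GL(α_i,K))/K^*`. -/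
def Gl (α : Q.I → ℕ) : Type := ∀ i : Q.I, Matrix.GeneralLinearGroup (Fin (α i)) K

/-- The conjugation action of `∏_i GL(α_i,K)` on `Rep(Q̄,α)`. -/
def glAct (α : Q.I → ℕ) (g : Q.Gl K α) (x : Q.Rep K α) : Q.Rep K α :=
  fun a => (g (Q.dh a) : Matrix (Fin (α (Q.dh a))) (Fin (α (Q.dh a))) K) * x a *
    (((g (Q.dt a))⁻¹ : Matrix.GeneralLinearGroup (Fin (α (Q.dt a))) K) :
      Matrix (Fin (α (Q.dt a))) (Fin (α (Q.dt a))) K)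

/-- Coordinates on `Rep(Q̄,α)`: matrix entries. -/
def Coords (α : Q.I → ℕ) : Type :=
  Σ a : Q.DA, Fin (α (Q.dh a)) × Fin (α (Q.dt a))

/-- The coordinate ring `K[V]` of a subset `V` of `Rep(Q̄,α)` : the algebra of
`K`-valued functions on `V` which are restrictions of polynomial functions. -/
def fnRing (α : Q.I → ℕ) (V : Set (Q.Rep K α)) : Subalgebra K (↥V → K) :=
  (MvPolynomial.aeval
    (fun c : Q.Coords α => fun v : ↥V => v.1 c.1 c.2.1 c.2.2) :
    MvPolynomial (Q.Coords α) K →ₐ[K] (↥V → K)).range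

end WithField

end FinQuiver

/-- The subalgebra of functions invariant under a relation (e.g. the orbit
relation of a group action). -/
def relInv (K : Type) [Field K] {V : Type} (R : V → V → Prop) :
    Subalgebra K (V → K) where
  carrier := {f | ∀ x y : V, R x y → f x = f y}
  mul_mem' := by
    intro f g hf hg x y hxy
    simp only [Pi.mul_apply, hf x y hxy, hg x y hxy]
  one_mem' := fun x y _ => rfl
  add_mem' := by
    intro f g hf hg x y hxy
    simp only [Pi.add_apply, hf x y hxy, hg x y hxy]
  zero_mem' := fun x y _ => rfl
  algebraMap_mem' := fun c x y _ => rfl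

namespace FinQuiver

variable (Q : FinQuiver) (K : Type) [Field K]

/-- The coordinate ring of the Marsden–Weinstein reduction
`N(λ,α) = μ_α^{-1}(λ) ⫽ G(α)` : the `G(α)`-invariant functions in the coordinate
ring of `μ_α^{-1}(λ)`.  Two such reductions are isomorphic as (affine) varieties
exactly when these `K`-algebras are isomorphic. -/
def InvRing (l : Q.I → K) (α : Q.I → ℕ) :
    Subalgebra K (↥(Q.MomentFiber K l α) → K) :=
  Q.fnRing K α (Q.MomentFiber K l α) ⊓
    relInv K (fun x y : ↥(Q.MomentFiber K l α) =>
      ∃ g : Q.Gl K α, y.1 = Q.glAct K α g x.1)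

/-- Index type for a product `∏_t X_t^{m_t}`. -/
@[reducible] def SymIdx (s : ℕ) (m : Fin s → ℕ) : Type := Σ t : Fin s, Fin (m t)

/-- The product `∏_{t} Rep(Q̄, d_t)^{m_t}` of representation spaces. -/
def SymRep (s : ℕ) (m : Fin s → ℕ) (d : Fin s → (Q.I → ℕ)) : Type :=
  ∀ p : SymIdx s m, Q.Rep K (d p.1)

/-- The product `∏_t μ_{d_t}^{-1}(λ)^{m_t}` of moment map fibres. -/
def SymFiber (s : ℕ) (m : Fin s → ℕ) (d : Fin s → (Q.I → ℕ)) (l : Q.I → K) :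
    Set (Q.SymRep K s m d) :=
  {x | ∀ p : SymIdx s m, x p ∈ Q.MomentFiber K l (d p.1)}

/-- Polynomial functions on the product of fibres. -/
def symFnRing (s : ℕ) (m : Fin s → ℕ) (d : Fin s → (Q.I → ℕ)) (l : Q.I → K) :
    Subalgebra K (↥(Q.SymFiber K s m d l) → K) :=
  (MvPolynomial.aeval
    (fun c : Σ p : SymIdx s m, Q.Coords (d p.1) =>
      fun v : ↥(Q.SymFiber K s m d l) => v.1 c.1 c.2.1 c.2.2.1 c.2.2.2) :
    MvPolynomial (Σ p : SymIdx s m, Q.Coords (d p.1)) K →ₐ[K]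
      (↥(Q.SymFiber K s m d l) → K)).range

/-- The componentwise action of the product of the groups `∏ GL(d_t)^{m_t}`. -/
def symGlAct (s : ℕ) (m : Fin s → ℕ) (d : Fin s → (Q.I → ℕ))
    (g : ∀ p : SymIdx s m, Q.Gl K (d p.1)) (x : Q.SymRep K s m d) :
    Q.SymRep K s m d :=
  fun p => Q.glAct K (d p.1) (g p) (x p)

/-- The action of `∏_t S_{m_t}` permuting the factors of each `X_t^{m_t}`. -/
def symPermAct (s : ℕ) (m : Fin s → ℕ) (d : Fin s → (Q.I → ℕ))
    (π : ∀ t : Fin s, Equiv.Perm (Fin (m t))) (x : Q.SymRep K s m d) :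
    Q.SymRep K s m d :=
  fun p => x ⟨p.1, π p.1 p.2⟩

/-- The coordinate ring of the product of symmetric products
`∏_t S^{m_t} N(λ, d_t)` of Marsden–Weinstein reductions: functions on
`∏_t μ_{d_t}^{-1}(λ)^{m_t}` which are polynomial, invariant under all the groups
`G(d_t)` acting on the separate factors, and symmetric under permutations of the
`m_t` factors of each type `t`. -/
def SymInvRing (s : ℕ) (m : Fin s → ℕ) (d : Fin s → (Q.I → ℕ)) (l : Q.I → K) :
    Subalgebra K (↥(Q.SymFiber K s m d l) → K) :=
  Q.symFnRing K s m d l ⊓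
    relInv K (fun x y : ↥(Q.SymFiber K s m d l) =>
      ∃ g : ∀ p : SymIdx s m, Q.Gl K (d p.1), y.1 = Q.symGlAct K s m d g x.1) ⊓
    relInv K (fun x y : ↥(Q.SymFiber K s m d l) =>
      ∃ π : ∀ t : Fin s, Equiv.Perm (Fin (m t)), y.1 = Q.symPermAct K s m d π x.1)

/-- The trace function `tr_p` of an oriented cycle `p` in `Q̄` :
`tr_p(x) = tr(x_{a_1} ⋯ x_{a_ℓ})`, written out via matrix entries. -/
def cycTr (α : Q.I → ℕ) (p : Q.Cyc) (x : Q.Rep K α) : K :=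
  ∑ c : ∀ i : Fin (p.n + 1), Fin (α (Q.dh (p.ar i))),
    ∏ i : Fin (p.n + 1),
      x (p.ar i) (c i) (Fin.cast (congrArg α (p.compat i)).symm (c (i + 1)))

/-- `U` is a subrepresentation of the `Π^λ`-module given by the point
`x ∈ Rep(Q̄,α)` : a collection of subspaces stable under all the maps `x_a`. -/
def SubRep (α : Q.I → ℕ) (x : Q.Rep K α)
    (U : ∀ i : Q.I, Submodule K (Fin (α i) → K)) : Prop :=
  ∀ a : Q.DA, ∀ v ∈ U (Q.dt a), (x a).mulVec v ∈ U (Q.dh a)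

/-- The module given by `x` has the simple module `S_{i₀}` (dimension vector
`ε_{i₀}`, all arrows acting as zero) as a composition factor: it has a subquotient
of dimension vector `ε_{i₀}` on which all arrows act as zero. -/
def HasSFactor (α : Q.I → ℕ) (i0 : Q.I) (x : Q.Rep K α) : Prop :=
  ∃ U W : ∀ i : Q.I, Submodule K (Fin (α i) → K),
    Q.SubRep K α x U ∧ Q.SubRep K α x W ∧ (∀ i, U i ≤ W i) ∧
    (∀ i, Module.finrank K (W i) =
      Module.finrank K (U i) + (if i = i0 then 1 else 0)) ∧
    (∀ a : Q.DA, Q.dh a = i0 → Q.dt a = i0 →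
      ∀ v ∈ W (Q.dt a), (x a).mulVec v ∈ U (Q.dh a))

/-- `W/U` is a simple subquotient of the module given by `x`; the simple
subquotients of a module are, up to isomorphism, exactly its composition factors. -/
def SimpleSubquot (α : Q.I → ℕ) (x : Q.Rep K α)
    (U W : ∀ i : Q.I, Submodule K (Fin (α i) → K)) : Prop :=
  Q.SubRep K α x U ∧ Q.SubRep K α x W ∧ (∀ i, U i ≤ W i) ∧ U ≠ W ∧
    ∀ V : ∀ i : Q.I, Submodule K (Fin (α i) → K),
      Q.SubRep K α x V → (∀ i, U i ≤ V i) → (∀ i, V i ≤ W i) → V = U ∨ V = W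

/-- The direct sum map `∏_{j=1}^m Rep(Q̄,δ) → Rep(Q̄,mδ)` (block diagonal). -/
def dsMap (δ : Q.I → ℕ) (m : ℕ) (y : Fin m → Q.Rep K δ) :
    Q.Rep K (fun i => m * δ i) :=
  fun a => Matrix.of fun r c =>
    if (finProdFinEquiv.symm r).1 = (finProdFinEquiv.symm c).1 then
      y (finProdFinEquiv.symm r).1 a (finProdFinEquiv.symm r).2
        (finProdFinEquiv.symm c).2
    else 0

end FinQuiver



namespace FFT

section Orth
variable {n : Type} [Fintype n] [DecidableEq n]

lemma exists_proj (A : Submodule ℚ (Matrix n n ℚ)) :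
    ∃ π : Matrix n n ℚ →ₗ[ℚ] Matrix n n ℚ, (∀ X, π X ∈ A) ∧
      (∀ X, ∀ Y ∈ A, (Y.transpose * (X - π X)).trace = 0) := by
  let B : LinearMap.BilinForm ℚ (Matrix n n ℚ) :=
    LinearMap.mk₂ ℚ (fun X Y => (X.transpose * Y).trace)
      (by intros; simp [Matrix.add_mul]) (by intros; simp)
      (by intros; simp [Matrix.mul_add]) (by intros; simp)
  have hB : B.IsRefl := by
    intro X Y h
    change (Y.transpose * X).trace = 0
    have h' : (X.transpose * Y).trace = 0 := h
    rw [← Matrix.trace_transpose]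
    simpa using h'
  have hd : Disjoint A (B.orthogonal A) := by
    rw [Submodule.disjoint_def]
    intro X hX hX'
    have h : (X.transpose * X).trace = 0 := hX' X hX
    rw [← Matrix.conjTranspose_eq_transpose_of_trivial] at h
    exact Matrix.trace_conjTranspose_mul_self_eq_zero_iff.1 h
  have hc := (LinearMap.BilinForm.isCompl_orthogonal_iff_disjoint hB).2 hd
  refine ⟨A.subtype ∘ₗ A.projectionOnto _ hc, fun X => by simp, fun X Y hY => ?_⟩
  have h2 : X - (A.subtype ∘ₗ A.projectionOnto _ hc) X ∈ B.orthogonal A := by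
    have : X - (A.subtype ∘ₗ A.projectionOnto _ hc) X
      = (B.orthogonal A).subtype ((B.orthogonal A).projectionOnto _ hc.symm X) := by
      rw [sub_eq_iff_eq_add, add_comm]
      exact (Submodule.projection_add_projection_eq_self hc X).symm
    rw [this]; simp
  exact h2 Y hY

lemma eq_zero_of_trace {n : Type} [Fintype n] {X : Matrix n n ℚ} (h : (X.transpose * X).trace = 0) : X = 0 := by
  rw [← Matrix.conjTranspose_eq_transpose_of_trivial] at h
  exact Matrix.trace_conjTranspose_mul_self_eq_zero_iff.1 h

/-- Reynolds operator for a transpose-closed monoid of rational matrices. -/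
lemma reynolds (S : Set (Matrix n n ℚ)) (h1 : 1 ∈ S) (hm : ∀ a ∈ S, ∀ b ∈ S, a * b ∈ S)
    (ht : ∀ a ∈ S, a.transpose ∈ S) :
    ∃ P : Matrix n n ℚ, (∀ s ∈ S, P * s = P) ∧
      (1 - P ∈ Submodule.span ℚ {D | ∃ a ∈ S, ∃ b ∈ S, D = a - b}) := by
  set J := Submodule.span ℚ {D | ∃ a ∈ S, ∃ b ∈ S, D = a - b} with hJ
  obtain ⟨π, hπ, ho⟩ := exists_proj J
  refine ⟨1 - π 1, ?_, by simpa using hπ 1⟩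
  have hr : ∀ s ∈ S, ∀ X ∈ J, X * s ∈ J := by
    intro s hs X hX
    induction hX using Submodule.span_induction with
    | mem x hx =>
      obtain ⟨a, ha, b, hb, rfl⟩ := hx
      exact Submodule.subset_span ⟨a * s, hm a ha s hs, b * s, hm b hb s hs, by simp [sub_mul]⟩
    | zero => simp
    | add x y _ _ hx hy => rw [add_mul]; exact J.add_mem hx hy
    | smul c x _ hx => rw [smul_mul_assoc]; exact J.smul_mem c hx
  intro s hs
  set P := 1 - π 1 with hP
  have hPs : P * s - P ∈ J := by
    have : P * s - P = (s - 1) - (π 1 * s - π 1) := by rw [hP]; noncomm_ring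
    rw [this]
    exact J.sub_mem (Submodule.subset_span ⟨s, hs, 1, h1, rfl⟩)
      (J.sub_mem (hr s hs _ (hπ 1)) (hπ 1))
  have h3 : (P * s - P) * s.transpose - (P * s - P) ∈ J :=
    J.sub_mem (hr _ (ht s hs) _ hPs) hPs
  have h4 := ho 1 _ h3
  rw [← sub_eq_zero]
  apply eq_zero_of_trace
  rw [← hP] at h4
  have e : ((P * s - P) * s.transpose - (P * s - P)).transpose * P
     = (s - 1) * ((P * s - P).transpose * P) := by
    simp only [Matrix.transpose_sub, Matrix.transpose_mul, Matrix.transpose_transpose]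
    noncomm_ring
  rw [e, Matrix.trace_mul_comm] at h4
  rw [← h4]
  congr 1
  noncomm_ring

/-- Double commutant theorem for transpose-closed sets. -/
lemma double_commutant (Gen : Set (Matrix n n ℚ)) (A : Submodule ℚ (Matrix n n ℚ))
    (h1 : (1 : Matrix n n ℚ) ∈ A) (ht : ∀ a ∈ Gen, a.transpose ∈ Gen)
    (hm : ∀ a ∈ Gen, ∀ x ∈ A, a * x ∈ A) (C : Matrix n n ℚ)
    (hC : ∀ b : Matrix n n ℚ, (∀ a ∈ Gen, a * b = b * a) → C * b = b * C) : C ∈ A := by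
  obtain ⟨π, hπ, ho⟩ := exists_proj A
  have huniq : ∀ X, X ∈ A → (∀ Y ∈ A, (Y.transpose * X).trace = 0) → X = 0 :=
    fun X hX h => eq_zero_of_trace (h X hX)
  have hid : ∀ X ∈ A, π X = X := by
    intro X hX
    have := huniq (X - π X) (A.sub_mem hX (hπ X)) (ho X)
    exact (sub_eq_zero.1 this).symm
  have hcomm : ∀ a ∈ Gen, ∀ X, a * π X = π (a * X) := by
    intro a ha X
    rw [← sub_eq_zero]
    apply huniq _ (A.sub_mem (hm a ha _ (hπ X)) (hπ _))
    intro Y hY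
    have e : Y.transpose * (a * π X - π (a * X)) =
      Y.transpose * (a * X - π (a * X)) - (a.transpose * Y).transpose * (X - π X) := by
      simp only [Matrix.transpose_mul, Matrix.transpose_transpose]; noncomm_ring
    rw [e, Matrix.trace_sub, ho _ _ hY, ho _ _ (hm _ (ht a ha) _ hY), sub_zero]
  let b : n → n → Matrix n n ℚ := fun s t => Matrix.of fun r r' => π (Matrix.single r' s 1) r t
  have hexp : ∀ (a : Matrix n n ℚ) (r' s : n),
      a * Matrix.single r' s (1:ℚ) = ∑ u, a u r' • Matrix.single u s (1:ℚ) := by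
    intro a r' s
    ext x y
    simp [Matrix.mul_apply, Matrix.single_apply, Matrix.sum_apply, ite_and, Finset.sum_ite_eq]
  have hb : ∀ s t, ∀ a ∈ Gen, a * b s t = b s t * a := by
    intro s t a ha
    ext r r'
    have h := congrFun (congrFun (hcomm a ha (Matrix.single r' s 1)) r) t
    rw [hexp, map_sum, Matrix.sum_apply, Matrix.mul_apply] at h
    rw [Matrix.mul_apply, Matrix.mul_apply]
    simp only [b, Matrix.of_apply]
    rw [h]
    exact Finset.sum_congr rfl fun u _ => by
      rw [map_smul, Matrix.smul_apply, smul_eq_mul, mul_comm]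
  have hfin : C = π C := by
    ext r t
    have h1' : (1 : Matrix n n ℚ) = ∑ s, Matrix.single s s (1:ℚ) := by
      rw [Matrix.sum_single_one]
    have hCe : C = ∑ s, ∑ u, C u s • Matrix.single u s (1:ℚ) := by
      simp_rw [← hexp]
      rw [← Finset.mul_sum, ← h1', mul_one]
    have e1 : C r t = ∑ s, (C * b s t) r s := by
      have : C r t = (C * π 1) r t := by rw [hid 1 h1, mul_one]
      rw [this, h1', map_sum, Finset.mul_sum, Matrix.sum_apply]
      refine Finset.sum_congr rfl fun s _ => ?_
      simp [Matrix.mul_apply, b]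
    rw [e1]
    conv_rhs => rw [hCe]
    simp only [map_sum, Matrix.sum_apply]
    refine Finset.sum_congr rfl fun s _ => ?_
    rw [hC _ (hb s t), Matrix.mul_apply]
    exact Finset.sum_congr rfl fun u _ => by
      rw [map_smul, Matrix.smul_apply, smul_eq_mul, mul_comm]; rfl
  rw [hfin]; exact hπ C

end Orth

section Cyc
/-- Contraction along a permutation lies in any subalgebra containing the traces. -/
lemma perm_contract {R A T : Type} [CommRing R] [CommRing A] [Algebra R A] [Fintype T]
    [DecidableEq T] (S : Subalgebra R A) (M : Set (Matrix T T A))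
    (hM : ∀ x ∈ M, ∀ y ∈ M, x * y ∈ M) (hS : ∀ x ∈ M, x.trace ∈ S)
    (κ : Type) [Fintype κ] [DecidableEq κ] :
    ∀ (σ : Equiv.Perm κ) (Y : κ → Matrix T T A), (∀ k, Y k ∈ M) →
      ∑ q : κ → T, ∏ k, Y k (q (σ k)) (q k) ∈ S := by
  have hfin : Finite κ := inferInstance
  rename_i inst1 inst2
  revert inst1 inst2
  refine @fun i1 i2 => Finite.induction_empty_option (P := fun κ => ∀ (_ : Fintype κ) (_ : DecidableEq κ)
    (σ : Equiv.Perm κ) (Y : κ → Matrix T T A), (∀ k, Y k ∈ M) →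
      ∑ q : κ → T, ∏ k, Y k (q (σ k)) (q k) ∈ S) ?_ ?_ ?_ κ i1 i2
  · intro α β e ih inst inst2 σ Y hY
    let _ := Fintype.ofEquiv β e.symm
    let _ := e.decidableEq
    have h := ih inferInstance inferInstance (e.trans (σ.trans e.symm)) (fun k => Y (e k)) (fun k => hY _)
    have e1 : ∑ q : α → T, ∏ k, Y (e k) (q ((e.trans (σ.trans e.symm)) k)) (q k) =
        ∑ q : β → T, ∏ k, Y k (q (σ k)) (q k) := by
      refine Fintype.sum_equiv (e.arrowCongr (Equiv.refl T)) _ _ fun q => ?_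
      refine Fintype.prod_equiv e _ _ fun k => ?_
      simp
    rw [← e1]; exact h
  · intro inst inst2 σ Y hY
    refine S.sum_mem fun q _ => S.prod_mem fun k _ => k.elim
  · intro κ hκ ih inst inst2 σ Y hY
    classical
    have hinst : inst = instFintypeOption := Subsingleton.elim _ _
    subst hinst
    obtain ⟨⟨i, τ⟩, rfl⟩ := Equiv.Perm.decomposeOption.symm.surjective σ
    have key : ∀ f : (Option κ → T) → A, ∑ q, f q =
        ∑ q' : κ → T, ∑ t : T, f (fun o => o.elim t q') := by
      intro f
      rw [← Fintype.sum_prod_type']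
      refine Fintype.sum_equiv ((Equiv.piOptionEquivProd (β := fun _ => T)).trans
        (Equiv.prodComm _ _)) _ _ fun q => ?_
      congr 1
      funext o
      cases o <;> rfl
    rw [key]
    cases i with
    | none =>
      have : ∀ q' : κ → T, ∑ t : T, (∏ k, Y k
          ((fun o : Option κ => o.elim t q') (Equiv.Perm.decomposeOption.symm (none, τ) k))
          ((fun o : Option κ => o.elim t q') k)) =
          (Y none).trace * ∏ k, Y (some k) (q' (τ k)) (q' k) := by
        intro q'
        simp [Fintype.prod_option, Matrix.trace, Finset.sum_mul]
      simp_rw [this]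
      rw [← Finset.mul_sum]
      exact S.mul_mem (hS _ (hY _)) (ih inferInstance inferInstance τ (fun k => Y (some k)) fun k => hY _)
    | some j =>
      have : ∀ q' : κ → T, ∑ t : T, (∏ k, Y k
          ((fun o : Option κ => o.elim t q') (Equiv.Perm.decomposeOption.symm (some j, τ) k))
          ((fun o : Option κ => o.elim t q') k)) =
          ∏ k, (Function.update (fun k => Y (some k)) (τ.symm j) (Y none * Y (some (τ.symm j)))) k
            (q' (τ k)) (q' k) := by
        intro q'
        rw [← Finset.mul_prod_erase _ _ (Finset.mem_univ (τ.symm j))]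
        simp only [Function.update_self, Equiv.apply_symm_apply, Matrix.mul_apply, Finset.sum_mul]
        refine Finset.sum_congr rfl fun t _ => ?_
        rw [Fintype.prod_option, ← Finset.mul_prod_erase _ _ (Finset.mem_univ (τ.symm j)),
          ← mul_assoc]
        congr 1
        · simp
        · refine Finset.prod_congr rfl fun k hk => ?_
          have hk' : k ≠ τ.symm j := Finset.ne_of_mem_erase hk
          have hk2 : τ k ≠ j := fun h => hk' (by rw [← h]; simp)
          rw [Function.update_of_ne hk']
          have : (Equiv.Perm.decomposeOption.symm (some j, τ)) (some k) = some (τ k) := by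
            simp [Equiv.swap_apply_def, hk2]
          rw [this]; rfl
      simp_rw [this]
      refine ih inferInstance inferInstance τ _ fun k => ?_
      by_cases hk : k = τ.symm j
      · subst hk; simpa using hM _ (hY _) _ (hY _)
      · simpa [Function.update_of_ne hk] using hY _

lemma list_prod_entry {A T : Type} [CommRing A] [Fintype T] [DecidableEq T] :
    ∀ (n : ℕ) (M : Fin (n + 1) → Matrix T T A) (p q : T),
    (List.ofFn M).prod p q = ∑ c : Fin n → T, ∏ i : Fin (n + 1),
      M i ((Fin.cons p c : Fin (n + 1) → T) i) ((Fin.snoc c q : Fin (n + 1) → T) i) := by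
  intro n
  induction n with
  | zero => intro M p q; simp [Fin.snoc]
  | succ n ih =>
    intro M p q
    rw [List.ofFn_succ, List.prod_cons, Matrix.mul_apply]
    rw [← (Fin.consEquiv (fun _ => T)).sum_comp, Fintype.sum_prod_type]
    refine Finset.sum_congr rfl fun t _ => ?_
    rw [ih, Finset.mul_sum]
    refine Finset.sum_congr rfl fun c _ => ?_
    rw [Fin.prod_univ_succ (n := n + 1)]
    simp only [Fin.consEquiv, Equiv.coe_fn_mk, ← Fin.cons_snoc_eq_snoc_cons, Fin.cons_zero,
      Fin.cons_succ]

lemma trace_list_prod {A T : Type} [CommRing A] [Fintype T] [DecidableEq T]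
    (n : ℕ) (M : Fin (n + 1) → Matrix T T A) :
    (List.ofFn M).prod.trace = ∑ c : Fin (n + 1) → T, ∏ i, M i (c i) (c (i + 1)) := by
  rw [← (Fin.consEquiv (fun _ => T)).sum_comp, Fintype.sum_prod_type, Matrix.trace]
  refine Finset.sum_congr rfl fun t _ => ?_
  rw [Matrix.diag_apply, list_prod_entry]
  refine Finset.sum_congr rfl fun c _ => ?_
  refine Finset.prod_congr rfl fun i _ => ?_
  rw [Fin.snoc_eq_cons_rotate]
  change M i _ ((Fin.cons t c : Fin (n + 1) → T) (finRotate (n + 1) i)) = _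
  rw [finRotate_apply]
  rfl

end Cyc
end FFT

namespace FFT
section SW
variable {I : Type} [Fintype I] [DecidableEq I] (α : I → ℕ)

/-- The total index set. -/
abbrev TT := Σ i : I, Fin (α i)

/-- Tensor power of a matrix. -/
def tp {T R : Type} [CommRing R] (d : ℕ) (b : Matrix T T R) : Matrix (Fin d → T) (Fin d → T) R :=
  Matrix.of fun p q => ∏ k, b (p k) (q k)

lemma perm_of_sum_single {X κ : Type} [Fintype κ] [DecidableEq X] (u v : κ → X)
    (h : (∑ k, Finsupp.single (u k) 1 : X →₀ ℕ) = ∑ k, Finsupp.single (v k) 1) :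
    ∃ σ : Equiv.Perm κ, u = v ∘ σ := by
  have hc : ∀ x, Fintype.card {k // u k = x} = Fintype.card {k // v k = x} := by
    intro x
    have := DFunLike.congr_fun h x
    simpa [Finsupp.finsetSum_apply, Finsupp.single_apply, Fintype.card_subtype] using this
  refine ⟨Equiv.ofFiberEquiv (f := u) (g := v) fun x => Fintype.equivOfCardEq (hc x), ?_⟩
  funext k
  exact (Equiv.ofFiberEquiv_map _ k).symm

lemma symm_functional (d : ℕ)
    (Λ : Matrix (Fin d → TT α) (Fin d → TT α) ℚ →ₗ[ℚ] ℚ)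
    (hΛ : ∀ β : ∀ i, Matrix (Fin (α i)) (Fin (α i)) ℚ, (∀ i, (β i).det ≠ 0) →
      Λ (tp d (Matrix.blockDiagonal' β)) = 0)
    (b : Matrix (Fin d → TT α) (Fin d → TT α) ℚ)
    (hb : ∀ (σ : Equiv.Perm (Fin d)) p q, b (p ∘ σ) (q ∘ σ) = b p q)
    (hb' : ∀ p q, b p q ≠ 0 → ∀ k, (p k).1 = (q k).1) : Λ b = 0 := by
  classical
  have hexp : ∀ Y, Λ Y = ∑ p, ∑ q, Y p q * Λ (Matrix.single p q 1) := by
    intro Y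
    conv_lhs => rw [Matrix.matrix_eq_sum_single Y]
    simp only [map_sum]
    refine Finset.sum_congr rfl fun p _ => Finset.sum_congr rfl fun q _ => ?_
    rw [← smul_eq_mul, ← map_smul]
    simp
  let f : MvPolynomial (TT α × TT α) ℚ := ∑ p : Fin d → TT α, ∑ q : Fin d → TT α,
    if (∀ k, (p k).1 = (q k).1) then
      Λ (Matrix.single p q 1) • ∏ k, MvPolynomial.X (p k, q k) else 0
  let D : MvPolynomial (TT α × TT α) ℚ :=
    ∏ i, Matrix.det (Matrix.of fun r c : Fin (α i) => MvPolynomial.X (⟨i, r⟩, ⟨i, c⟩))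
  have hD : ∀ v, MvPolynomial.eval v D =
      ∏ i, Matrix.det (Matrix.of fun r c : Fin (α i) => v (⟨i, r⟩, ⟨i, c⟩)) := by
    intro v
    simp only [D, map_prod, RingHom.map_det]
    refine Finset.prod_congr rfl fun i _ => ?_
    congr 1
    ext r c
    simp
  have hf : ∀ v, MvPolynomial.eval v f = Λ (tp d (Matrix.blockDiagonal' fun i =>
      (Matrix.of fun r c : Fin (α i) => v (⟨i, r⟩, ⟨i, c⟩)))) := by
    intro v
    rw [hexp]
    simp only [f, map_sum]
    refine Finset.sum_congr rfl fun p _ => Finset.sum_congr rfl fun q _ => ?_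
    have hbd : ∀ x y : TT α, (Matrix.blockDiagonal' fun i =>
      (Matrix.of fun r c : Fin (α i) => v (⟨i, r⟩, ⟨i, c⟩))) x y = if x.1 = y.1 then v (x, y) else 0 := by
      rintro ⟨i, r⟩ ⟨j, c⟩
      by_cases h : i = j
      · subst h; simp
      · simp [Matrix.blockDiagonal'_apply_ne _ _ _ h, h]
    simp only [tp, Matrix.of_apply, hbd]
    split_ifs with h
    · simp [MvPolynomial.smul_eval, h, mul_comm]
    · push Not at h
      obtain ⟨k, hk⟩ := h
      rw [Finset.prod_eq_zero (Finset.mem_univ k) (by simp [hk])]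
      simp
  have hf0 : f = 0 := by
    have h1 : f * D = 0 := by
      apply MvPolynomial.funext
      intro v
      rw [map_mul, map_zero, hf, hD]
      by_cases h : ∀ i, Matrix.det (Matrix.of fun r c : Fin (α i) => v (⟨i, r⟩, ⟨i, c⟩)) ≠ 0
      · rw [hΛ _ h, zero_mul]
      · push Not at h
        obtain ⟨i, hi⟩ := h
        rw [Finset.prod_eq_zero (Finset.mem_univ i) hi, mul_zero]
    refine (mul_eq_zero.1 h1).resolve_right fun hD0 => ?_
    have h2 := hD (fun x => if x.1 = x.2 then 1 else 0)
    rw [hD0, map_zero] at h2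
    have h3 : ∀ i, (Matrix.of fun r c : Fin (α i) =>
        (if (⟨i, r⟩ : TT α) = ⟨i, c⟩ then (1 : ℚ) else 0)) = 1 := by
      intro i; ext r c; simp [Matrix.one_apply]
    simp only [h3] at h2
    simp at h2
  let bt : (TT α × TT α →₀ ℕ) → ℚ := fun m =>
    if h : ∃ u : Fin d → TT α × TT α, m = ∑ k, Finsupp.single (u k) 1 then
      b (fun k => (h.choose k).1) (fun k => (h.choose k).2) else 0
  have hbt : ∀ p q, bt (∑ k, Finsupp.single (p k, q k) 1) = b p q := by
    intro p q
    have h : ∃ u : Fin d → TT α × TT α, (∑ k, Finsupp.single (p k, q k) 1 : TT α × TT α →₀ ℕ)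
      = ∑ k, Finsupp.single (u k) 1 := ⟨fun k => (p k, q k), rfl⟩
    simp only [bt, dif_pos h]
    obtain ⟨σ, hσ⟩ := perm_of_sum_single _ _ h.choose_spec.symm
    rw [hσ]
    exact hb σ p q
  let ℓ := (MvPolynomial.basisMonomials (TT α × TT α) ℚ).constr ℚ bt
  have hℓ : ∀ p q : Fin d → TT α, ℓ (∏ k, MvPolynomial.X (p k, q k)) = b p q := by
    intro p q
    rw [← hbt]
    have : (∏ k, MvPolynomial.X (p k, q k) : MvPolynomial (TT α × TT α) ℚ) =
      MvPolynomial.basisMonomials (TT α × TT α) ℚ (∑ k, Finsupp.single (p k, q k) 1) := by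
      rw [MvPolynomial.coe_basisMonomials]
      exact (MvPolynomial.monomial_sum_one _ _).symm
    rw [this]
    exact Module.Basis.constr_basis _ _ _ _
  have h0 : ℓ f = 0 := by rw [hf0, map_zero]
  rw [hexp, ← h0]
  simp only [f, map_sum]
  refine Finset.sum_congr rfl fun p _ => Finset.sum_congr rfl fun q _ => ?_
  split_ifs with h
  · rw [map_smul, hℓ, smul_eq_mul, mul_comm]
  · have : b p q = 0 := by
      by_contra h'
      exact h (hb' p q h')
    simp [this]

/-- Coloured permutation matrices. -/
def cpm (d : ℕ) (σ : Equiv.Perm (Fin d)) (c : Fin d → I) :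
    Matrix (Fin d → TT α) (Fin d → TT α) ℚ :=
  Matrix.of fun p q => if p = q ∘ σ ∧ (∀ k, (q k).1 = c k) then 1 else 0

lemma schur_weyl (d : ℕ) (C : Matrix (Fin d → TT α) (Fin d → TT α) ℚ)
    (hC : ∀ β : ∀ i, Matrix (Fin (α i)) (Fin (α i)) ℚ, (∀ i, (β i).det ≠ 0) →
      C * tp d (Matrix.blockDiagonal' β) = tp d (Matrix.blockDiagonal' β) * C) :
    C ∈ Submodule.span ℚ {M | ∃ σ c, M = cpm α d σ c} := by
  classical
  have key : ∀ (σ : Equiv.Perm (Fin d)) (p q : Fin d → TT α), p = q ∘ σ ↔ q = p ∘ σ.symm := by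
    intro σ p q
    constructor
    · rintro rfl; funext k; simp
    · rintro rfl; funext k; simp
  apply double_commutant {M | ∃ σ c, M = cpm α d σ c}
  · have : (1 : Matrix (Fin d → TT α) (Fin d → TT α) ℚ) = ∑ c : Fin d → I, cpm α d 1 c := by
      ext p q
      simp only [Matrix.sum_apply, cpm, Matrix.of_apply, Matrix.one_apply]
      by_cases h : p = q
      · subst h
        rw [Finset.sum_eq_single (fun k => (p k).1)]
        · simp
        · intro c _ hc
          rw [if_neg]
          rintro ⟨-, h⟩
          exact hc (funext fun k => (h k).symm)
        · simp
      · simp [h]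
    rw [this]
    exact Submodule.sum_mem _ fun c _ => Submodule.subset_span ⟨1, c, rfl⟩
  · rintro _ ⟨σ, c, rfl⟩
    refine ⟨σ.symm, c ∘ σ, ?_⟩
    ext p q
    simp only [cpm, Matrix.transpose_apply, Matrix.of_apply]
    refine if_congr ?_ rfl rfl
    rw [key σ q p]
    constructor
    · rintro ⟨rfl, h⟩
      refine ⟨rfl, fun k => ?_⟩
      have := h (σ k)
      simpa using this
    · rintro ⟨rfl, h⟩
      refine ⟨rfl, fun k => ?_⟩
      have := h (σ.symm k)
      simpa using this
  · rintro _ ⟨σ, c, rfl⟩ x hx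
    induction hx using Submodule.span_induction with
    | mem x hx =>
      obtain ⟨τ, e, rfl⟩ := hx
      have : cpm α d σ c * cpm α d τ e = if c = e ∘ τ then cpm α d (τ * σ) e else 0 := by
        ext p q
        rw [Matrix.mul_apply, Finset.sum_eq_single (q ∘ τ)]
        · by_cases hq : ∀ k, (q k).1 = e k
          · simp only [cpm, Matrix.of_apply, hq, Function.comp_apply, implies_true, and_true,
              if_true, mul_one]
            by_cases hce : c = e ∘ τ
            · subst hce
              simp [hq, Function.comp_assoc]
            · have : ¬ ∀ k, e (τ k) = c k := fun h => hce (funext fun k => (h k).symm)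
              simp [hce, this]
          · split_ifs <;> simp [cpm, hq]
        · intro u _ hu
          simp [cpm, hu]
        · simp
      rw [this]
      split_ifs
      · exact Submodule.subset_span ⟨_, _, rfl⟩
      · simp
    | zero => simp
    | add x y _ _ hx hy => rw [mul_add]; exact Submodule.add_mem _ hx hy
    | smul t x _ hx => rw [mul_smul_comm]; exact Submodule.smul_mem _ t hx
  · intro b hb
    have main : ∀ (σ : Equiv.Perm (Fin d)) (p q : Fin d → TT α),
        b p q = if (∀ k, (q k).1 = (p k).1) then b (p ∘ σ) (q ∘ σ) else 0 := by
      intro σ p q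
      have h := congrFun (congrFun (hb _ ⟨σ, fun k => (p k).1, rfl⟩) (p ∘ σ)) q
      rw [Matrix.mul_apply, Matrix.mul_apply, Finset.sum_eq_single p,
        Finset.sum_eq_single (q ∘ σ)] at h
      · simpa [cpm] using h
      · intro u _ hu
        simp [cpm, hu]
      · simp
      · intro u _ hu
        have : ¬ (p ∘ σ = u ∘ σ) := fun h' => hu (by
          rw [key] at h'
          rw [h']; funext k; simp)
        simp [cpm, this]
      · simp
    have hsupp : ∀ p q, b p q ≠ 0 → ∀ k, (p k).1 = (q k).1 := by
      intro p q h k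
      have := main 1 p q
      by_contra hk
      rw [if_neg (fun h' => hk (h' k).symm)] at this
      exact h this
    have hsym : ∀ (σ : Equiv.Perm (Fin d)) p q, b (p ∘ σ) (q ∘ σ) = b p q := by
      intro σ p q
      rw [main σ p q]
      split_ifs with h
      · rfl
      · by_contra h'
        refine h fun k => ?_
        have := hsupp _ _ h' (σ.symm k)
        simpa using this.symm
    ext r s
    rw [← sub_eq_zero]
    let Λ : Matrix (Fin d → TT α) (Fin d → TT α) ℚ →ₗ[ℚ] ℚ :=
      { toFun := fun Y => (C * Y - Y * C) r s
        map_add' := by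
          intro x y
          simp only [mul_add, add_mul, Matrix.sub_apply, Matrix.add_apply]; ring
        map_smul' := by
          intro t x
          simp only [mul_smul_comm, smul_mul_assoc, Matrix.sub_apply, Matrix.smul_apply,
            smul_eq_mul, RingHom.id_apply]; ring }
    refine symm_functional α d Λ (fun β hβ => ?_) b hsym hsupp
    change (_ - _ : Matrix _ _ ℚ) r s = 0
    rw [hC β hβ, sub_self]; rfl

end SW
end FFT

namespace FFT
section Avg
variable {I : Type} [Fintype I] [DecidableEq I] (α : I → ℕ)

lemma tp_mul {T R : Type} [CommRing R] [Fintype T] [DecidableEq T] (d : ℕ) (b c : Matrix T T R) :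
    tp d (b * c) = tp d b * tp d c := by
  ext p q
  simp only [tp, Matrix.of_apply, Matrix.mul_apply, Finset.prod_univ_sum, Fintype.piFinset_univ,
    Finset.prod_mul_distrib]

lemma tp_one {T R : Type} [CommRing R] [DecidableEq T] (d : ℕ) :
    tp d (1 : Matrix T T R) = 1 := by
  ext p q
  simp only [tp, Matrix.of_apply, Matrix.one_apply]
  split_ifs with h
  · subst h; simp
  · obtain ⟨k, hk⟩ := Function.ne_iff.1 h
    exact Finset.prod_eq_zero (Finset.mem_univ k) (by simp [hk])

lemma tp_transpose {T R : Type} [CommRing R] (d : ℕ) (b : Matrix T T R) :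
    tp d b.transpose = (tp d b).transpose := rfl

/-- The representation on degree-`d` coefficient tensors. -/
def rho {T R : Type} [CommRing R] (d : ℕ) (B B' : Matrix T T R) :
    Matrix ((Fin d → T) × (Fin d → T)) ((Fin d → T) × (Fin d → T)) R :=
  Matrix.kroneckerMap (· * ·) (tp d B) (tp d B').transpose

lemma rho_mul {T R : Type} [CommRing R] [Fintype T] [DecidableEq T] (d : ℕ)
    (B B' C C' : Matrix T T R) : rho d B B' * rho d C C' = rho d (B * C) (C' * B') := by
  unfold rho
  rw [tp_mul, tp_mul, Matrix.transpose_mul, Matrix.mul_kronecker_mul]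

lemma rho_one {T R : Type} [CommRing R] [DecidableEq T] (d : ℕ) :
    rho d (1 : Matrix T T R) 1 = 1 := by
  unfold rho
  rw [tp_one, Matrix.transpose_one, Matrix.one_kronecker_one]

lemma rho_transpose {T R : Type} [CommRing R] (d : ℕ) (B B' : Matrix T T R) :
    (rho d B B').transpose = rho d B.transpose B'.transpose := rfl

lemma averaging (D : ℕ) :
    ∃ P : ∀ d : Fin (D + 1), Matrix ((Fin d → TT α) × (Fin d → TT α))
        ((Fin d → TT α) × (Fin d → TT α)) ℚ,
      (∀ (d : Fin (D + 1)) rc, (Matrix.of fun p q => P d rc (p, q)) ∈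
        Submodule.span ℚ {M | ∃ σ c, M = cpm α d σ c}) ∧
      ∀ (N : Type) [AddCommGroup N] [Module ℚ N]
        (Φ : ∀ d : Fin (D + 1), Matrix ((Fin d → TT α) × (Fin d → TT α))
          ((Fin d → TT α) × (Fin d → TT α)) ℚ →ₗ[ℚ] N) (v : N),
        (∀ β β' : ∀ i, Matrix (Fin (α i)) (Fin (α i)) ℚ, (∀ i, β i * β' i = 1) →
          ∑ d, Φ d (rho d (Matrix.blockDiagonal' β) (Matrix.blockDiagonal' β')) = v) →
        ∑ d, Φ d (P d) = v := by
  classical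
  let R : (∀ i, Matrix (Fin (α i)) (Fin (α i)) ℚ) → (∀ i, Matrix (Fin (α i)) (Fin (α i)) ℚ) →
      Matrix (Σ d : Fin (D + 1), (Fin d → TT α) × (Fin d → TT α))
        (Σ d : Fin (D + 1), (Fin d → TT α) × (Fin d → TT α)) ℚ := fun β β' =>
    Matrix.blockDiagonal' fun d : Fin (D + 1) =>
      rho d (Matrix.blockDiagonal' β) (Matrix.blockDiagonal' β')
  let S := {M | ∃ β β' : ∀ i, Matrix (Fin (α i)) (Fin (α i)) ℚ, (∀ i, β i * β' i = 1) ∧ M = R β β'}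
  have hS1 : 1 ∈ S := by
    refine ⟨fun _ => 1, fun _ => 1, fun i => by simp, ?_⟩
    have : (Matrix.blockDiagonal' fun i : I => (1 : Matrix (Fin (α i)) (Fin (α i)) ℚ)) = 1 :=
      Matrix.blockDiagonal'_one
    simp only [R, this, rho_one]
    exact Matrix.blockDiagonal'_one.symm
  obtain ⟨P, hP, hJ⟩ := reynolds S hS1
    (by
      rintro _ ⟨β, β', h, rfl⟩ _ ⟨γ, γ', h', rfl⟩
      refine ⟨fun i => β i * γ i, fun i => γ' i * β' i, fun i => ?_, ?_⟩
      · rw [mul_assoc, ← mul_assoc (γ i), h', one_mul, h]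
      · simp only [R]
        rw [← Matrix.blockDiagonal'_mul]
        simp only [rho_mul, Matrix.blockDiagonal'_mul])
    (by
      rintro _ ⟨β, β', h, rfl⟩
      refine ⟨fun i => (β i).transpose, fun i => (β' i).transpose, fun i => ?_, ?_⟩
      · rw [← Matrix.transpose_mul, mul_eq_one_comm.1 (h i), Matrix.transpose_one]
      · simp only [R]
        rw [Matrix.blockDiagonal'_transpose]
        simp only [rho_transpose, Matrix.blockDiagonal'_transpose])
  refine ⟨fun d => Matrix.of fun x y => P ⟨d, x⟩ ⟨d, y⟩, ?_, ?_⟩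
  · intro d rc
    apply schur_weyl
    intro β hβ
    set C : Matrix (Fin d → TT α) (Fin d → TT α) ℚ :=
      Matrix.of fun p q => (Matrix.of fun x y => P ⟨d, x⟩ ⟨d, y⟩) rc (p, q) with hCdef
    have hinv : ∀ i, β i * (β i)⁻¹ = 1 := fun i =>
      Matrix.mul_nonsing_inv _ (isUnit_iff_ne_zero.2 (hβ i))
    set B := Matrix.blockDiagonal' β with hB
    set B' := Matrix.blockDiagonal' (fun i => (β i)⁻¹) with hB'
    have hBB : B' * B = 1 := by
      rw [hB, hB', ← Matrix.blockDiagonal'_mul]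
      simp only [fun i => mul_eq_one_comm.1 (hinv i)]
      exact Matrix.blockDiagonal'_one
    have h1 := hP _ ⟨fun i => (β i).transpose, fun i => ((β i)⁻¹).transpose, fun i => by
      rw [← Matrix.transpose_mul, mul_eq_one_comm.1 (hinv i), Matrix.transpose_one], rfl⟩
    have h2 : C = tp d B * C * tp d B' := by
      ext p' q'
      have h3 := congrFun (congrFun h1 ⟨d, rc⟩) ⟨d, (p', q')⟩
      rw [Matrix.mul_apply, Fintype.sum_sigma, Finset.sum_eq_single d] at h3
      · simp only [R, Matrix.blockDiagonal'_apply_eq] at h3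
        rw [← Matrix.blockDiagonal'_transpose, ← Matrix.blockDiagonal'_transpose,
          ← rho_transpose, ← hB, ← hB'] at h3
        change P ⟨d, rc⟩ ⟨d, (p', q')⟩ = _
        rw [← h3, Matrix.mul_apply, Fintype.sum_prod_type, Finset.sum_comm]
        refine Finset.sum_congr rfl fun q _ => ?_
        rw [Matrix.mul_apply, Finset.sum_mul]
        refine Finset.sum_congr rfl fun p _ => ?_
        change P ⟨d, rc⟩ ⟨d, (p, q)⟩ * (tp d B p' p * tp d B' q q') =
          tp d B p' p * P ⟨d, rc⟩ ⟨d, (p, q)⟩ * tp d B' q q'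
        ring
      · intro e _ he
        refine Finset.sum_eq_zero fun x _ => ?_
        simp only [R]
        rw [Matrix.blockDiagonal'_apply_ne _ _ _ he, mul_zero]
      · simp
    conv_lhs => rw [h2]
    rw [mul_assoc, ← tp_mul, hBB, tp_one, mul_one]
  · intro N _ _ Φ v hv
    let Ψ : Matrix (Σ d : Fin (D + 1), (Fin d → TT α) × (Fin d → TT α))
        (Σ d : Fin (D + 1), (Fin d → TT α) × (Fin d → TT α)) ℚ →ₗ[ℚ] N :=
      { toFun := fun M => ∑ d, Φ d (Matrix.of fun x y => M ⟨d, x⟩ ⟨d, y⟩)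
        map_add' := by
          intro x y
          rw [← Finset.sum_add_distrib]
          refine Finset.sum_congr rfl fun d _ => ?_
          rw [← map_add]; rfl
        map_smul' := by
          intro t x
          rw [Finset.smul_sum]
          refine Finset.sum_congr rfl fun d _ => ?_
          rw [RingHom.id_apply, ← map_smul]; rfl }
    have hΨS : ∀ s ∈ S, Ψ s = v := by
      rintro _ ⟨β, β', h, rfl⟩
      rw [← hv β β' h]
      change ∑ d, Φ d (Matrix.of fun x y => R β β' ⟨d, x⟩ ⟨d, y⟩) = _
      refine Finset.sum_congr rfl fun d _ => ?_
      congr 1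
      ext x y
      simp [R, Matrix.blockDiagonal'_apply_eq]
    have hΨJ : Ψ (1 - P) = 0 := by
      have : Submodule.span ℚ {D | ∃ a ∈ S, ∃ b ∈ S, D = a - b} ≤ LinearMap.ker Ψ := by
        rw [Submodule.span_le]
        rintro _ ⟨a, ha, b, hb, rfl⟩
        simp [hΨS a ha, hΨS b hb]
      exact this hJ
    rw [map_sub, hΨS 1 hS1, sub_eq_zero] at hΨJ
    exact hΨJ.symm

end Avg
end FFT

namespace FFT
section Quiv
open FinQuiver
variable {Q : FinQuiver} {K : Type} [Field K] {α : Q.I → ℕ}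

/-- The arrow `a` of a representation as a block matrix on the total space. -/
def blk (x : Q.Rep K α) (a : Q.DA) : Matrix (TT α) (TT α) K :=
  Matrix.of fun p q => if h : p.1 = Q.dh a ∧ q.1 = Q.dt a then
    x a (Fin.cast (congrArg α h.1) p.2) (Fin.cast (congrArg α h.2) q.2) else 0

lemma blk_apply (x : Q.Rep K α) (a : Q.DA) (r : Fin (α (Q.dh a))) (c : Fin (α (Q.dt a))) :
    blk x a ⟨Q.dh a, r⟩ ⟨Q.dt a, c⟩ = x a r c := by
  simp [blk]

lemma blk_left (x : Q.Rep K α) (a : Q.DA) (p q : TT α) (h : p.1 ≠ Q.dh a) :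
    blk x a p q = 0 := by
  simp [blk, h]

lemma blk_right (x : Q.Rep K α) (a : Q.DA) (p q : TT α) (h : q.1 ≠ Q.dt a) :
    blk x a p q = 0 := by
  simp [blk, h]

lemma bd_mul {I : Type} [Fintype I] [DecidableEq I] {α : I → ℕ}
    (β : ∀ i, Matrix (Fin (α i)) (Fin (α i)) K) (N : Matrix (TT α) (TT α) K) (i : I)
    (r : Fin (α i)) (q : TT α) :
    (Matrix.blockDiagonal' β * N : Matrix (TT α) (TT α) K) ⟨i, r⟩ q
      = ∑ s, β i r s * N ⟨i, s⟩ q := by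
  rw [Matrix.mul_apply]
  rw [Fintype.sum_sigma, Finset.sum_eq_single i]
  · simp only [Matrix.blockDiagonal'_apply_eq]
  · intro j _ hj
    refine Finset.sum_eq_zero fun s _ => ?_
    rw [Matrix.blockDiagonal'_apply_ne _ _ _ (Ne.symm hj), zero_mul]
  · simp

lemma mul_bd {I : Type} [Fintype I] [DecidableEq I] {α : I → ℕ}
    (β : ∀ i, Matrix (Fin (α i)) (Fin (α i)) K) (N : Matrix (TT α) (TT α) K) (i : I)
    (r : Fin (α i)) (q : TT α) :
    (N * Matrix.blockDiagonal' β : Matrix (TT α) (TT α) K) q ⟨i, r⟩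
      = ∑ s, N q ⟨i, s⟩ * β i s r := by
  rw [Matrix.mul_apply]
  rw [Fintype.sum_sigma, Finset.sum_eq_single i]
  · simp only [Matrix.blockDiagonal'_apply_eq]
  · intro j _ hj
    refine Finset.sum_eq_zero fun s _ => ?_
    rw [Matrix.blockDiagonal'_apply_ne _ _ _ hj, mul_zero]
  · simp

/-- Block diagonal matrix of a group element. -/
def bg (g : Q.Gl K α) : Matrix (TT α) (TT α) K :=
  Matrix.blockDiagonal' fun i => (g i : Matrix (Fin (α i)) (Fin (α i)) K)

/-- Block diagonal matrix of the inverse of a group element. -/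
def bgi (g : Q.Gl K α) : Matrix (TT α) (TT α) K :=
  Matrix.blockDiagonal' fun i => (((g i)⁻¹ : Matrix.GeneralLinearGroup (Fin (α i)) K) :
    Matrix (Fin (α i)) (Fin (α i)) K)

lemma bgi_mul (g : Q.Gl K α) : bgi g * bg g = 1 := by
  unfold bg bgi TT
  rw [← Matrix.blockDiagonal'_mul]
  simp only [Units.inv_mul]
  exact Matrix.blockDiagonal'_one

lemma bg_mul (g : Q.Gl K α) : bg g * bgi g = 1 := mul_eq_one_comm.1 (bgi_mul g)

lemma blk_glAct (g : Q.Gl K α) (x : Q.Rep K α) (a : Q.DA) :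
    blk (Q.glAct K α g x) a = bg g * blk x a * bgi g := by
  ext ⟨i, r⟩ ⟨j, c⟩
  unfold bgi
  rw [mul_bd]
  unfold bg
  simp only [bd_mul]
  by_cases hi : i = Q.dh a
  · subst hi
    by_cases hj : j = Q.dt a
    · subst hj
      simp only [blk_apply]
      simp only [glAct, Matrix.mul_apply]
    · rw [blk_right _ _ _ _ hj]
      symm
      refine Finset.sum_eq_zero fun s _ => ?_
      rw [Finset.sum_eq_zero, zero_mul]
      intro t _
      rw [blk_right _ _ _ _ hj, mul_zero]
  · rw [blk_left _ _ _ _ hi]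
    symm
    refine Finset.sum_eq_zero fun s _ => ?_
    rw [Finset.sum_eq_zero, zero_mul]
    intro t _
    rw [blk_left _ _ _ _ hi, mul_zero]

lemma cycTr_eq (p : Q.Cyc) (x : Q.Rep K α) :
    Q.cycTr K α p x = (List.ofFn fun i => blk x (p.ar i)).prod.trace := by
  rw [trace_list_prod]
  unfold cycTr
  refine Fintype.sum_of_injective (fun c i => (⟨Q.dh (p.ar i), c i⟩ : TT α)) ?_ _ _ ?_ ?_
  · intro c c' h
    funext i
    have := congrFun h i
    simpa [Sigma.mk.inj_iff] using this
  · intro c hc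
    have : ∃ i, (c i).1 ≠ Q.dh (p.ar i) := by
      by_contra! h
      apply hc
      refine ⟨fun i => Fin.cast (congrArg α (h i)) (c i).2, ?_⟩
      funext i
      have aux : ∀ (t : TT α) (j : Q.I) (e : t.1 = j),
          (⟨j, Fin.cast (congrArg α e) t.2⟩ : TT α) = t := by
        rintro ⟨t, s⟩ j rfl
        rfl
      exact aux (c i) _ (h i)
    obtain ⟨i, hi⟩ := this
    exact Finset.prod_eq_zero (Finset.mem_univ i) (blk_left _ _ _ _ hi)
  · intro c
    refine Finset.prod_congr rfl fun i _ => ?_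
    have h := p.compat i
    simp only [blk, Matrix.of_apply]
    rw [dif_pos ⟨trivial, h.symm⟩]
    rfl

lemma noncyc_eq (n : ℕ) (ar : Fin (n + 1) → Q.DA) (x : Q.Rep K α)
    (h : ¬ ∀ i, Q.dt (ar i) = Q.dh (ar (i + 1))) :
    (List.ofFn fun i => blk x (ar i)).prod.trace = 0 := by
  rw [trace_list_prod]
  push Not at h
  obtain ⟨i, hi⟩ := h
  refine Finset.sum_eq_zero fun c _ => ?_
  by_cases h1 : (c (i + 1)).1 = Q.dh (ar (i + 1))
  · refine Finset.prod_eq_zero (Finset.mem_univ i) (blk_right _ _ _ _ ?_)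
    rw [h1]; exact Ne.symm hi
  · exact Finset.prod_eq_zero (Finset.mem_univ (i + 1)) (blk_left _ _ _ _ h1)

lemma moment_glAct (g : Q.Gl K α) (x : Q.Rep K α) (i : Q.I) :
    Q.moment K α (Q.glAct K α g x) i =
      (g i : Matrix (Fin (α i)) (Fin (α i)) K) * Q.moment K α x i *
      (((g i)⁻¹ : Matrix.GeneralLinearGroup (Fin (α i)) K) : Matrix (Fin (α i)) (Fin (α i)) K) := by
  unfold moment
  rw [mul_sub, sub_mul, Finset.mul_sum, Finset.sum_mul, Finset.mul_sum, Finset.sum_mul]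
  congr 1
  · refine Finset.sum_congr rfl fun a _ => ?_
    split_ifs with h
    · subst h
      change (Q.glAct K α g x (Sum.inl a) * Q.glAct K α g x (Sum.inr a)) = _ *
        (x (Sum.inl a) * x (Sum.inr a)) * _
      simp only [glAct]
      simp only [Matrix.mul_assoc]
      rw [← Matrix.mul_assoc _ _ (x (Sum.inr a) * _), Units.inv_mul, Matrix.one_mul]
    · simp
  · refine Finset.sum_congr rfl fun a _ => ?_
    split_ifs with h
    · subst h
      change (Q.glAct K α g x (Sum.inr a) * Q.glAct K α g x (Sum.inl a)) = _ *
        (x (Sum.inr a) * x (Sum.inl a)) * _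
      simp only [glAct]
      simp only [Matrix.mul_assoc]
      rw [← Matrix.mul_assoc _ _ (x (Sum.inl a) * _), Units.inv_mul, Matrix.one_mul]
    · simp

lemma fiber_glAct (l : Q.I → K) (g : Q.Gl K α) (x : Q.Rep K α) (hx : x ∈ Q.MomentFiber K l α) :
    Q.glAct K α g x ∈ Q.MomentFiber K l α := by
  intro i
  rw [moment_glAct, hx i, Matrix.mul_smul, Matrix.mul_one, Matrix.smul_mul, Units.mul_inv]

lemma cycTr_inv (p : Q.Cyc) (g : Q.Gl K α) (x : Q.Rep K α) :
    Q.cycTr K α p (Q.glAct K α g x) = Q.cycTr K α p x := by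
  have key : ∀ L : List Q.DA, (L.map fun a => blk (Q.glAct K α g x) a).prod =
      bg g * (L.map fun a => blk x a).prod * bgi g := by
    intro L
    induction L with
    | nil => simp [bg_mul]
    | cons a L ih =>
      rw [List.map_cons, List.prod_cons, ih, blk_glAct, List.map_cons, List.prod_cons]
      simp only [mul_assoc]
      rw [← mul_assoc (bgi g) (bg g), bgi_mul, one_mul]
  have e : ∀ y : Q.Rep K α, (List.ofFn fun i => blk y (p.ar i)) =
      (List.ofFn p.ar).map fun a => blk y a := by
    intro y
    rw [List.map_ofFn]; rfl
  rw [cycTr_eq, cycTr_eq, e, e, key, Matrix.trace_mul_cycle, bgi_mul, one_mul]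

lemma cycTr_fn (p : Q.Cyc) (V : Set (Q.Rep K α)) :
    (fun x : V => Q.cycTr K α p x.1) ∈ Q.fnRing K α V := by
  have : (fun x : V => Q.cycTr K α p x.1) =
      ∑ c : ∀ i : Fin (p.n + 1), Fin (α (Q.dh (p.ar i))),
      ∏ i : Fin (p.n + 1), fun x : V =>
      x.1 (p.ar i) (c i) (Fin.cast (congrArg α (p.compat i)).symm (c (i + 1))) := by
    funext x
    simp [cycTr, Finset.sum_apply, Finset.prod_apply]
  rw [this]
  refine Subalgebra.sum_mem _ fun c _ => Subalgebra.prod_mem _ fun i _ => ?_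
  refine ⟨MvPolynomial.X ⟨p.ar i, c i, Fin.cast (congrArg α (p.compat i)).symm (c (i + 1))⟩, ?_⟩
  exact MvPolynomial.aeval_X _ _

lemma poly_words {σ : Type} (F : MvPolynomial σ K) :
    ∃ (D : ℕ) (ι : Type) (_ : Fintype ι) (c : ι → K) (d : ι → Fin (D + 1))
      (w : ∀ i, Fin (d i) → σ), ∀ x : σ → K,
      MvPolynomial.eval x F = ∑ i, c i * ∏ k, x (w i k) := by
  classical
  let L : (σ →₀ ℕ) → List σ := fun m => (Finsupp.toMultiset m).toList
  refine ⟨F.support.sup fun m => (L m).length, F.support, inferInstance, fun m => F.coeff m.1,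
    fun m => ⟨(L m.1).length, Nat.lt_succ_of_le
      (Finset.le_sup (f := fun m => (L m).length) m.2)⟩, fun m => (L m.1).get, ?_⟩
  intro x
  rw [MvPolynomial.eval_eq, ← Finset.sum_coe_sort]
  refine Finset.sum_congr rfl fun m _ => ?_
  congr 1
  have h1 : ∏ k, x ((L m.1).get k) = ((L m.1).map x).prod := by
    rw [← List.prod_ofFn]
    congr 1
    conv_rhs => rw [← List.ofFn_get (L m.1)]
    rw [List.map_ofFn]; rfl
  rw [h1]
  have h2 : ((L m.1).map x).prod = ((Finsupp.toMultiset m.1).map x).prod := by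
    conv_rhs => rw [← Multiset.coe_toList (Finsupp.toMultiset m.1)]
    rw [Multiset.map_coe, Multiset.prod_coe]
  rw [h2, Finsupp.toMultiset_map, Finsupp.prod_toMultiset,
    Finsupp.prod_mapDomain_index (by simp) (by intros; rw [pow_add])]
  rfl

lemma prod_conj {T : Type} [Fintype T] [DecidableEq T] (d : ℕ) (B B' : Matrix T T K)
    (X : Fin d → Matrix T T K) (r c : Fin d → T) :
    ∏ k, (B * X k * B') (r k) (c k) = ∑ p : Fin d → T, ∑ q : Fin d → T,
      ((∏ k, B (r k) (p k)) * ∏ k, B' (q k) (c k)) * ∏ k, X k (p k) (q k) := by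
  simp only [Matrix.mul_apply, Finset.sum_mul]
  rw [Finset.prod_univ_sum, Fintype.piFinset_univ]
  simp only [Finset.prod_univ_sum, Fintype.piFinset_univ]
  rw [Finset.sum_comm]
  refine Finset.sum_congr rfl fun p _ => Finset.sum_congr rfl fun q _ => ?_
  simp only [Finset.prod_mul_distrib]
  ring

variable [CharZero K]

/-- Contraction of a coefficient tensor against the block matrices of a word of arrows. -/
def theta (V : Set (Q.Rep K α)) (d : ℕ) (a : Fin d → Q.DA) (c : K) :
    Matrix (Fin d → TT α) (Fin d → TT α) ℚ →ₗ[ℚ] (V → K) where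
  toFun := fun C v => c * ∑ p, ∑ q, (C p q : K) * ∏ k, blk v.1 (a k) (p k) (q k)
  map_add' := by
    intro C C'
    funext v
    simp only [Matrix.add_apply, Rat.cast_add, add_mul, Finset.sum_add_distrib, mul_add,
      Pi.add_apply]
  map_smul' := by
    intro t C
    funext v
    simp only [Matrix.smul_apply, smul_eq_mul, Rat.cast_mul, Pi.smul_apply, RingHom.id_apply,
      Rat.smul_def, mul_assoc, ← Finset.mul_sum]
    ring

/-- The algebra generated by the trace functions. -/
def trAlg (Q : FinQuiver) (K : Type) [Field K] (α : Q.I → ℕ) (V : Set (Q.Rep K α)) :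
    Subalgebra K (V → K) :=
  Algebra.adjoin K {f : V → K | ∃ p : Q.Cyc, f = fun x => Q.cycTr K α p x.1}

lemma contract_mem (V : Set (Q.Rep K α)) (d : ℕ) (a : Fin d → Q.DA) (σ : Equiv.Perm (Fin d)) :
    (fun v : V => ∑ q : Fin d → TT α, ∏ k, blk v.1 (a k) (q (σ k)) (q k)) ∈ trAlg Q K α V := by
  classical
  let XV : Q.DA → Matrix (TT α) (TT α) (V → K) := fun a => Matrix.of fun p q v => blk v.1 a p q
  have hp : ∀ (L : List Q.DA) (p q : TT α) (v : V),
      (L.map XV).prod p q v = (L.map fun a => blk v.1 a).prod p q := by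
    intro L
    induction L with
    | nil =>
      intro p q v
      simp only [List.map_nil, List.prod_nil, Matrix.one_apply]
      split_ifs <;> rfl
    | cons b L ih =>
      intro p q v
      simp only [List.map_cons, List.prod_cons, Matrix.mul_apply, Finset.sum_apply, Pi.mul_apply, ih]
      rfl
  have := perm_contract (R := K) (A := V → K) (T := TT α) (trAlg Q K α V)
    {M | ∃ L : List Q.DA, L ≠ [] ∧ M = (L.map XV).prod}
    (by
      rintro _ ⟨L, hL, rfl⟩ _ ⟨L', hL', rfl⟩
      exact ⟨L ++ L', by simp [hL], by simp⟩)
    (by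
      rintro _ ⟨L, hL, rfl⟩
      have ht : (L.map XV).prod.trace = fun v : V => (L.map fun a => blk v.1 a).prod.trace := by
        funext v
        simp only [Matrix.trace, Finset.sum_apply, Matrix.diag_apply, hp]
      obtain ⟨n, hn⟩ : ∃ n, L.length = n + 1 :=
        Nat.exists_eq_succ_of_ne_zero (by simpa using hL)
      obtain ⟨ar, rfl⟩ : ∃ ar : Fin (n + 1) → Q.DA, L = List.ofFn ar := by
        refine ⟨fun i => L.get (i.cast hn.symm), ?_⟩
        apply List.ext_get
        · simp [hn]
        · intro m h1 h2
          simp only [List.get_ofFn]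
          rfl
      rw [ht]
      simp only [List.map_ofFn]
      by_cases hc : ∀ i, Q.dt (ar i) = Q.dh (ar (i + 1))
      · refine Algebra.subset_adjoin ⟨⟨n, ar, hc⟩, ?_⟩
        funext v
        rw [cycTr_eq]; rfl
      · convert Subalgebra.zero_mem _
        exact noncyc_eq n ar _ hc)
    (Fin d) σ (fun k => XV (a k)) (fun k => ⟨[a k], by simp, by simp⟩)
  convert this using 1
  funext v
  simp [Finset.sum_apply, Finset.prod_apply, XV]

lemma theta_mem (V : Set (Q.Rep K α)) (d : ℕ) (a : Fin d → Q.DA) (c : K)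
    (C : Matrix (Fin d → TT α) (Fin d → TT α) ℚ)
    (hC : C ∈ Submodule.span ℚ {M | ∃ σ c, M = cpm α d σ c}) :
    theta V d a c C ∈ trAlg Q K α V := by
  induction hC using Submodule.span_induction with
  | zero => rw [map_zero]; exact Subalgebra.zero_mem _
  | add x y _ _ hx hy => rw [map_add]; exact Subalgebra.add_mem _ hx hy
  | smul t x _ hx =>
    rw [map_smul]
    have : t • theta V d a c x = (t : K) • theta V d a c x := by
      funext v
      simp [Rat.smul_def]
    rw [this]
    exact Subalgebra.smul_mem _ hx _
  | mem x hx =>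
    obtain ⟨σ, e, rfl⟩ := hx
    have h0 : ∀ v : V, theta V d a c (cpm α d σ e) v =
        c * ∑ q : Fin d → TT α, if ∀ k, (q k).1 = e k then
          ∏ k, blk v.1 (a k) (q (σ k)) (q k) else 0 := by
      intro v
      change c * ∑ p, ∑ q, ((cpm α d σ e p q : ℚ) : K) * ∏ k, blk v.1 (a k) (p k) (q k) = _
      rw [Finset.sum_comm]
      congr 1
      refine Finset.sum_congr rfl fun q _ => ?_
      rw [Finset.sum_eq_single (q ∘ σ)]
      · simp only [cpm, Matrix.of_apply, true_and, Function.comp]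
        split_ifs <;> simp
      · intro p _ hp
        simp [cpm, hp]
      · simp
    by_cases he : ∀ k, e k = Q.dt (a k)
    · have : theta V d a c (cpm α d σ e) =
          c • fun v : V => ∑ q : Fin d → TT α, ∏ k, blk v.1 (a k) (q (σ k)) (q k) := by
        funext v
        rw [h0, Pi.smul_apply, smul_eq_mul]
        congr 1
        refine Finset.sum_congr rfl fun q _ => ?_
        split_ifs with hq
        · rfl
        · push Not at hq
          obtain ⟨k, hk⟩ := hq
          symm
          exact Finset.prod_eq_zero (Finset.mem_univ k) (blk_right _ _ _ _ (he k ▸ hk))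
      rw [this]
      exact Subalgebra.smul_mem _ (contract_mem V d a σ) _
    · push Not at he
      obtain ⟨k, hk⟩ := he
      have : theta V d a c (cpm α d σ e) = 0 := by
        funext v
        rw [h0, Finset.sum_eq_zero, mul_zero]; rfl
        intro q _
        split_ifs with hq
        · exact Finset.prod_eq_zero (Finset.mem_univ k)
            (blk_right _ _ _ _ (by rw [hq k]; exact hk))
        · rfl
      rw [this]
      exact Subalgebra.zero_mem _

/-- A row of a coefficient matrix, as a linear map. -/
def rowMap {W : Type} (rc : W × W) : Matrix (W × W) (W × W) ℚ →ₗ[ℚ] Matrix W W ℚ where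
  toFun := fun M => Matrix.of fun p q => M rc (p, q)
  map_add' := fun _ _ => rfl
  map_smul' := fun _ _ => rfl

/-- Row indices of a word of coordinates. -/
def rIdx {d : ℕ} (w : Fin d → Q.Coords α) : Fin d → TT α := fun k => ⟨Q.dh (w k).1, (w k).2.1⟩

/-- Column indices of a word of coordinates. -/
def cIdx {d : ℕ} (w : Fin d → Q.Coords α) : Fin d → TT α := fun k => ⟨Q.dt (w k).1, (w k).2.2⟩

/-- Contraction of the row of a coefficient matrix given by a word of coordinates. -/
def psi (V : Set (Q.Rep K α)) (d : ℕ) (w : Fin d → Q.Coords α) (c : K) :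
    Matrix ((Fin d → TT α) × (Fin d → TT α)) ((Fin d → TT α) × (Fin d → TT α)) ℚ →ₗ[ℚ] (V → K) :=
  (theta V d (fun k => (w k).1) c).comp (rowMap (rIdx w, cIdx w))

lemma psi_rho (V : Set (Q.Rep K α)) (d : ℕ) (w : Fin d → Q.Coords α) (c : K)
    (β β' : ∀ i, Matrix (Fin (α i)) (Fin (α i)) ℚ) (g : Q.Gl K α)
    (hg : bg g = (Matrix.blockDiagonal' β).map (Rat.castHom K))
    (hg' : bgi g = (Matrix.blockDiagonal' β').map (Rat.castHom K)) (v : V) :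
    psi V d w c (rho d (Matrix.blockDiagonal' β) (Matrix.blockDiagonal' β')) v =
      c * ∏ k, Q.glAct K α g v.1 (w k).1 (w k).2.1 (w k).2.2 := by
  have h1 : ∀ k, Q.glAct K α g v.1 (w k).1 (w k).2.1 (w k).2.2 =
      (bg g * blk v.1 (w k).1 * bgi g) (rIdx w k) (cIdx w k) := by
    intro k
    rw [← blk_glAct]
    exact (blk_apply _ _ _ _).symm
  simp only [h1]
  rw [prod_conj]
  change c * ∑ p, ∑ q, ((rho d (Matrix.blockDiagonal' β) (Matrix.blockDiagonal' β')
    (rIdx w, cIdx w) (p, q) : ℚ) : K) * _ = _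
  congr 1
  refine Finset.sum_congr rfl fun p _ => Finset.sum_congr rfl fun q _ => ?_
  congr 1
  change (((∏ k, Matrix.blockDiagonal' β (rIdx w k) (p k)) *
    ∏ k, Matrix.blockDiagonal' β' (q k) (cIdx w k) : ℚ) : K) = _
  rw [hg, hg']
  push_cast
  rfl

lemma hard (l : Q.I → K) (f : Q.MomentFiber K l α → K) (hf : f ∈ Q.InvRing K l α) :
    f ∈ trAlg Q K α (Q.MomentFiber K l α) := by
  classical
  obtain ⟨⟨F, hF⟩, hinv⟩ := hf
  obtain ⟨D, ι, _, c, d, w, hw⟩ := poly_words F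
  have hfv : ∀ v, f v = ∑ i, c i * ∏ k, v.1 (w i k).1 (w i k).2.1 (w i k).2.2 := by
    intro v
    rw [← hw (fun c => v.1 c.1 c.2.1 c.2.2), ← hF]
    have := MvPolynomial.map_aeval
      (fun c : Q.Coords α => fun v : Q.MomentFiber K l α => v.1 c.1 c.2.1 c.2.2)
      (Pi.evalRingHom _ v) F
    simp only [Pi.evalRingHom_apply] at this
    exact this
  obtain ⟨P, hP, hav⟩ := averaging α D
  let Φ : ∀ e : Fin (D + 1), Matrix ((Fin e → TT α) × (Fin e → TT α))
      ((Fin e → TT α) × (Fin e → TT α)) ℚ →ₗ[ℚ] (Q.MomentFiber K l α → K) := fun e =>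
    ∑ i, if h : d i = e then psi _ e (h ▸ w i) (c i) else 0
  have hΦ : ∀ M : (∀ e : Fin (D + 1), Matrix ((Fin e → TT α) × (Fin e → TT α))
      ((Fin e → TT α) × (Fin e → TT α)) ℚ),
      ∑ e, Φ e (M e) = ∑ i, psi (Q.MomentFiber K l α) (d i) (w i) (c i) (M (d i)) := by
    intro M
    simp only [Φ, LinearMap.sum_apply]
    rw [Finset.sum_comm]
    refine Finset.sum_congr rfl fun i _ => ?_
    rw [Finset.sum_eq_single (d i)]
    · rw [dif_pos rfl]
    · intro e _ he
      rw [dif_neg (Ne.symm he)]; rfl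
    · simp
  have hv := hav _ Φ f (by
    intro β β' h
    rw [hΦ fun e => rho e (Matrix.blockDiagonal' β) (Matrix.blockDiagonal' β')]
    have hK : ∀ i, (β i).map (Rat.castHom K) * (β' i).map (Rat.castHom K) = 1 := by
      intro i
      rw [← Matrix.map_mul, h i]
      exact Matrix.map_one _ (map_zero _) (map_one _)
    let g : Q.Gl K α := fun i => ⟨(β i).map (Rat.castHom K), (β' i).map (Rat.castHom K), hK i,
      mul_eq_one_comm.1 (hK i)⟩
    have hg : bg g = (Matrix.blockDiagonal' β).map (Rat.castHom K) :=
      (Matrix.blockDiagonal'_map β _ (map_zero _)).symm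
    have hg' : bgi g = (Matrix.blockDiagonal' β').map (Rat.castHom K) :=
      (Matrix.blockDiagonal'_map β' _ (map_zero _)).symm
    funext v
    rw [Finset.sum_apply]
    simp only [psi_rho _ _ _ _ β β' g hg hg' v]
    rw [hinv v ⟨_, fiber_glAct l g v.1 v.2⟩ ⟨g, rfl⟩, hfv])
  rw [← hv, hΦ]
  exact Subalgebra.sum_mem _ fun i _ => theta_mem _ _ _ _ _ (hP (d i) _)

end Quiv
end FFT

/-- the ring of invariants `K[μ_α^{-1}(λ)]^{G(α)}` is generated as a
`K`-algebra by the restrictions of the trace functions `tr_p` of oriented cycles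
`p` in the double quiver `Q̄`. -/
theorem stmt9 (Q : FinQuiver) (K : Type) [Field K] [CharZero K] [IsAlgClosed K]
    (l : Q.I → K) (α : Q.I → ℕ) :
    Q.InvRing K l α = Algebra.adjoin K
      {f : ↥(Q.MomentFiber K l α) → K |
        ∃ p : Q.Cyc, f = fun x => Q.cycTr K α p x.1} := by
  apply le_antisymm
  · intro f hf
    exact FFT.hard l f hf
  · rw [Algebra.adjoin_le_iff]
    rintro _ ⟨p, rfl⟩
    refine ⟨FFT.cycTr_fn p _, ?_⟩
    rintro x y ⟨g, hg⟩
    change Q.cycTr K α p x.1 = Q.cycTr K α p y.1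
    rw [hg, FFT.cycTr_inv]

end
end

section
/- Let i be a vertex with λ_i = 0 and (α,ε_i) > 0. Then every Π^λ-module of dimension vector α has the simple module S_i (of dimension vector ε_i, with all arrows acting as zero) as a composition factor, and there is an isomorphism of varieties N(λ, α − ε_i) ≅ N(λ,α). -/
open scoped BigOperators

noncomputable section

theorem rey_aux {N : Type} [Fintype N] [DecidableEq N] (J : Submodule ℚ (Matrix N N ℚ))
    (hmul : ∀ a ∈ J, ∀ b ∈ J, a * b ∈ J) (htr : ∀ a ∈ J, a.transpose ∈ J) :
    ∃ e ∈ J, ∀ a ∈ J, (1 - e) * a = 0 := by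
  classical
  have key : ∀ x : Matrix N N ℚ, x * x.transpose = 0 → x = 0 := by
    intro x hx
    have := (Matrix.self_mul_conjTranspose_mul_eq_zero (R := ℚ) x (1 : Matrix N N ℚ))
    simp only [mul_one] at this
    have h2 : x.conjTranspose = x.transpose := by
      ext i j; simp [Matrix.conjTranspose_apply]
    rw [h2] at this
    have := this.mp hx
    simpa using congrArg Matrix.transpose this
  let b := Module.finBasis ℚ J
  let s : Matrix N N ℚ := ∑ i, (b i : Matrix N N ℚ) * (b i : Matrix N N ℚ).transpose
  have hs : s ∈ J := J.sum_mem fun i _ => hmul _ (b i).2 _ (htr _ (b i).2)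
  have hker : ∀ x : Matrix N N ℚ, x * s = 0 → ∀ a ∈ J, x * a = 0 := by
    intro x hx
    have h1 : ∑ i, (x * (b i : Matrix N N ℚ)) * (x * (b i : Matrix N N ℚ)).transpose = 0 := by
      have : x * s * x.transpose = 0 := by rw [hx, zero_mul]
      rw [← this]
      simp only [s, Matrix.mul_sum, Matrix.sum_mul, Matrix.transpose_mul, Matrix.mul_assoc]
    have h2 : ∀ i, x * (b i : Matrix N N ℚ) = 0 := by
      intro i
      ext p q
      have h3 : ∑ i, ∑ j, (x * (b i : Matrix N N ℚ)) p j * (x * (b i : Matrix N N ℚ)) p j = 0 := by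
        have h3 := congrFun (congrFun h1 p) p
        rw [Matrix.sum_apply] at h3
        exact h3
      rw [Finset.sum_eq_zero_iff_of_nonneg
        (fun i _ => Finset.sum_nonneg fun j _ => mul_self_nonneg _)] at h3
      have h4 := h3 i (Finset.mem_univ _)
      rw [Finset.sum_eq_zero_iff_of_nonneg (fun j _ => mul_self_nonneg _)] at h4
      simpa using h4 q (Finset.mem_univ _)
    intro a ha
    have h5 : (⟨a, ha⟩ : J) ∈ Submodule.span ℚ (Set.range b) := by rw [b.span_eq]; trivial
    have h6 : ∀ y : J, y ∈ Submodule.span ℚ (Set.range b) → x * (y : Matrix N N ℚ) = 0 := by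
      intro y hy
      induction hy using Submodule.span_induction with
      | mem y hy => obtain ⟨i, rfl⟩ := hy; exact h2 i
      | zero => simp
      | add y z _ _ h1 h2 => simp [mul_add, h1, h2]
      | smul c y _ h => simp [h]
    exact h6 _ h5
  let φ : J →ₗ[ℚ] J :=
    { toFun := fun x => ⟨x * s, hmul _ x.2 _ hs⟩
      map_add' := by intro x y; ext1; simp [add_mul]
      map_smul' := by intro c x; ext1; simp }
  have hinj : Function.Injective φ := by
    rw [injective_iff_map_eq_zero]
    intro x hx
    have h1 : (x : Matrix N N ℚ) * s = 0 := congrArg Subtype.val hx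
    ext1
    exact key _ (hker _ h1 _ (htr _ x.2))
  have hsurj := LinearMap.injective_iff_surjective.mp hinj
  obtain ⟨e, he⟩ := hsurj ⟨s, hs⟩
  have he' : (e : Matrix N N ℚ) * s = s := congrArg Subtype.val he
  refine ⟨e, e.2, hker _ ?_⟩
  rw [sub_mul, one_mul, he', sub_self]

theorem rey {G N : Type} [Group G] [Fintype N] [DecidableEq N] (ρ : G →* Matrix N N ℚ)
    (htr : ∀ g, ∃ g', ρ g' = (ρ g).transpose) :
    ∃ c : G →₀ ℚ, (c.sum fun _ r => r) = 1 ∧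
      ∀ g, (c.sum fun h r => r • ρ h) * ρ g = c.sum fun h r => r • ρ h := by
  classical
  let J : Submodule ℚ (Matrix N N ℚ) := Submodule.span ℚ (Set.range fun g => ρ g - 1)
  have hJ : ∀ g, ρ g - 1 ∈ J := fun g => Submodule.subset_span ⟨g, rfl⟩
  have hmul : ∀ a ∈ J, ∀ b ∈ J, a * b ∈ J := by
    intro a ha b hb
    induction ha using Submodule.span_induction with
    | mem a ha =>
      obtain ⟨g, rfl⟩ := ha
      induction hb using Submodule.span_induction with
      | mem b hb =>
        obtain ⟨h, rfl⟩ := hb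
        have : (ρ g - 1) * (ρ h - 1) = (ρ (g * h) - 1) - (ρ g - 1) - (ρ h - 1) := by
          rw [map_mul]; noncomm_ring
        simp only [this]
        exact J.sub_mem (J.sub_mem (hJ _) (hJ _)) (hJ _)
      | zero => simp
      | add y z _ _ h1 h2 => rw [mul_add]; exact J.add_mem h1 h2
      | smul c y _ h => rw [mul_smul_comm]; exact J.smul_mem _ h
    | zero => simp
    | add y z _ _ h1 h2 => rw [add_mul]; exact J.add_mem h1 h2
    | smul c y _ h => rw [smul_mul_assoc]; exact J.smul_mem _ h
  have htr' : ∀ a ∈ J, a.transpose ∈ J := by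
    intro a ha
    induction ha using Submodule.span_induction with
    | mem a ha =>
      obtain ⟨g, rfl⟩ := ha
      obtain ⟨g', hg'⟩ := htr g
      have := hJ g'
      rw [hg'] at this
      simpa using this
    | zero => simp
    | add y z _ _ h1 h2 => rw [Matrix.transpose_add]; exact J.add_mem h1 h2
    | smul c y _ h => rw [Matrix.transpose_smul]; exact J.smul_mem _ h
  obtain ⟨e, he, hker⟩ := rey_aux J hmul htr'
  obtain ⟨c, hc⟩ := (Finsupp.mem_span_range_iff_exists_finsupp).mp he
  let c' : G →₀ ℚ := Finsupp.single 1 (1 + c.sum fun _ r => r) - c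
  have hlin : ∀ (M : Type) [AddCommGroup M] [Module ℚ M] (F : G → M),
      (c'.sum fun h r => r • F h) = F 1 - c.sum fun h r => r • (F h - F 1) := by
    intro M _ _ F
    have h1 : (c'.sum fun h r => r • F h) = Finsupp.linearCombination ℚ F c' := rfl
    rw [h1, map_sub, Finsupp.linearCombination_single, Finsupp.linearCombination_apply]
    simp only [smul_sub, Finsupp.sum, Finset.sum_sub_distrib, add_smul, one_smul, Finset.sum_smul]
    abel
  have hR : (c'.sum fun h r => r • ρ h) = 1 - e := by
    rw [hlin, map_one, hc]
  refine ⟨c', ?_, fun g => ?_⟩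
  · have := hlin ℚ (fun _ => 1)
    simpa using this
  · rw [hR]
    have := hker _ (hJ g)
    rw [mul_sub, mul_one, sub_eq_zero] at this
    exact this

theorem rey_family {G J : Type} [Group G] [Fintype J] {N : J → Type}
    [∀ j, Fintype (N j)] [∀ j, DecidableEq (N j)] (ρ : ∀ j, G →* Matrix (N j) (N j) ℚ)
    (htr : ∀ g, ∃ g', ∀ j, ρ j g' = (ρ j g).transpose) :
    ∃ c : G →₀ ℚ, (c.sum fun _ r => r) = 1 ∧
      ∀ j g, (c.sum fun h r => r • ρ j h) * ρ j g = c.sum fun h r => r • ρ j h := by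
  classical
  let R : G →* Matrix (Σ j, N j) (Σ j, N j) ℚ :=
    { toFun := fun g => Matrix.blockDiagonal' fun j => ρ j g
      map_one' := by
        have : (fun j => ρ j 1) = 1 := by funext j; simp
        rw [this, Matrix.blockDiagonal'_one]
      map_mul' := by
        intro g h
        simp only [map_mul, Matrix.blockDiagonal'_mul] }
  obtain ⟨c, hc1, hc2⟩ := rey R (by
    intro g
    obtain ⟨g', hg'⟩ := htr g
    refine ⟨g', ?_⟩
    simp only [R, MonoidHom.coe_mk, OneHom.coe_mk, hg', Matrix.blockDiagonal'_transpose])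
  refine ⟨c, hc1, fun j g => ?_⟩
  have hsum : (c.sum fun h r => r • R h) =
      Matrix.blockDiagonal' fun j => c.sum fun h r => r • ρ j h := by
    ext ⟨i, x⟩ ⟨i', y⟩
    rw [Finsupp.sum, Matrix.sum_apply]
    by_cases h : i = i'
    · subst h
      simp only [Matrix.smul_apply, R, MonoidHom.coe_mk, OneHom.coe_mk,
        Matrix.blockDiagonal'_apply_eq, Finsupp.sum, Matrix.sum_apply]
    · simp only [Matrix.smul_apply, R, MonoidHom.coe_mk, OneHom.coe_mk,
        Matrix.blockDiagonal'_apply_ne _ _ _ h, smul_zero, Finset.sum_const_zero]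
  have h := hc2 g
  rw [hsum] at h
  simp only [R, MonoidHom.coe_mk, OneHom.coe_mk] at h
  rw [← Matrix.blockDiagonal'_mul] at h
  exact congrFun (Matrix.blockDiagonal'_injective h) j

theorem perm_of_sum {S C : Type} [Fintype S] [DecidableEq S] [DecidableEq C] (f g : S → C)
    (h : ∑ s, Finsupp.single (f s) (1 : ℕ) = ∑ s, Finsupp.single (g s) (1 : ℕ)) :
    ∃ σ : Equiv.Perm S, f = g ∘ σ := by
  have h1 : ∀ c, Nonempty ({s // f s = c} ≃ {s // g s = c}) := by
    intro c
    have := DFunLike.congr_fun h c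
    simp only [Finsupp.coe_finsetSum, Finset.sum_apply, Finsupp.single_apply] at this
    simp only [Finset.sum_boole, Nat.cast_id] at this
    refine Fintype.card_eq.mp ?_
    rw [Fintype.card_subtype, Fintype.card_subtype, this]
  let e : ∀ c, {s // f s = c} ≃ {s // g s = c} := fun c => (h1 c).some
  refine ⟨Equiv.ofFiberEquiv e, ?_⟩
  funext s
  exact (Equiv.ofFiberEquiv_map e s).symm

theorem polarize {n d : ℕ} (φ τ : (Fin d → Fin n × Fin n) → ℚ)
    (hφ : ∀ g : Matrix.GeneralLinearGroup (Fin n) ℚ,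
      ∑ x, φ x * ∏ s, (g : Matrix (Fin n) (Fin n) ℚ) (x s).1 (x s).2 = 0)
    (hτ : ∀ x (σ : Equiv.Perm (Fin d)), τ (x ∘ σ) = τ x) : ∑ x, φ x * τ x = 0 := by
  classical
  let P : MvPolynomial (Fin n × Fin n) ℚ :=
    ∑ x : Fin d → Fin n × Fin n, MvPolynomial.C (φ x) * ∏ s, MvPolynomial.X (x s)
  let D : MvPolynomial (Fin n × Fin n) ℚ := (Matrix.mvPolynomialX (Fin n) (Fin n) ℚ).det
  have hD : D ≠ 0 := Matrix.det_mvPolynomialX_ne_zero _ _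
  have hPD : P * D = 0 := by
    apply MvPolynomial.funext
    intro v
    rw [map_mul, map_zero]
    by_cases hd : MvPolynomial.eval v D = 0
    · rw [hd, mul_zero]
    · have hdet : MvPolynomial.eval v D = (Matrix.of fun i j => v (i, j)).det := by
        simp only [D, RingHom.map_det]
        congr 1
        ext i j
        simp [Matrix.mvPolynomialX]
      rw [hdet] at hd
      have := hφ (Matrix.GeneralLinearGroup.mkOfDetNeZero _ hd)
      have hP : MvPolynomial.eval v P = 0 := by
        simp only [P, map_sum, map_mul, map_prod, MvPolynomial.eval_C, MvPolynomial.eval_X]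
        simpa [Matrix.GeneralLinearGroup.mkOfDetNeZero] using this
      rw [hP, zero_mul]
  have hP : P = 0 := (mul_eq_zero.mp hPD).resolve_right hD
  let mm : (Fin d → Fin n × Fin n) → (Fin n × Fin n →₀ ℕ) :=
    fun x => ∑ s, Finsupp.single (x s) 1
  have hP2 : P = ∑ x, MvPolynomial.monomial (mm x) (φ x) := by
    refine Finset.sum_congr rfl fun x _ => ?_
    have : (∏ s, MvPolynomial.X (x s) : MvPolynomial (Fin n × Fin n) ℚ) =
        MvPolynomial.monomial (mm x) 1 := by
      rw [MvPolynomial.monomial_sum_one]; rfl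
    rw [this, MvPolynomial.C_mul_monomial, mul_one]
  have hfac : ∃ t : (Fin n × Fin n →₀ ℕ) → ℚ, ∀ x, τ x = t (mm x) := by
    refine ⟨fun m => if h : ∃ x, mm x = m then τ h.choose else 0, fun x => ?_⟩
    have h : ∃ y, mm y = mm x := ⟨x, rfl⟩
    simp only [dif_pos h]
    obtain ⟨σ, hσ⟩ := perm_of_sum _ _ h.choose_spec
    rw [hσ, hτ]
  obtain ⟨t, ht⟩ := hfac
  have h3 : ∀ m, ∑ x, (if mm x = m then φ x else 0) = 0 := by
    intro m
    have := congrArg (MvPolynomial.coeff m) hP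
    rw [hP2] at this
    simpa [MvPolynomial.coeff_sum, MvPolynomial.coeff_monomial] using this
  calc ∑ x, φ x * τ x = ∑ x, ∑ m ∈ Finset.univ.image mm,
        (if mm x = m then φ x else 0) * t m := by
        refine Finset.sum_congr rfl fun x _ => ?_
        rw [Finset.sum_eq_single (mm x)]
        · simp [ht]
        · intro m _ hm
          rw [if_neg (Ne.symm hm), zero_mul]
        · intro h; exact absurd (Finset.mem_image_of_mem _ (Finset.mem_univ _)) h
    _ = 0 := by
        rw [Finset.sum_comm]
        simp only [← Finset.sum_mul, h3, zero_mul, Finset.sum_const_zero]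

/-- The permutation representation of the symmetric group on tensors. -/
def permRep (n d : ℕ) : Representation ℚ (Equiv.Perm (Fin d)) ((Fin d → Fin n) → ℚ) where
  toFun σ :=
    { toFun := fun v k => v (k ∘ σ)
      map_add' := fun _ _ => rfl
      map_smul' := fun _ _ => rfl }
  map_one' := rfl
  map_mul' := fun _ _ => rfl

theorem permRep_apply (n d : ℕ) (σ : Equiv.Perm (Fin d)) (v : (Fin d → Fin n) → ℚ)
    (k : Fin d → Fin n) : permRep n d σ v k = v (k ∘ σ) := rfl

theorem double_comm {n d : ℕ} (T : Matrix (Fin d → Fin n) (Fin d → Fin n) ℚ)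
    (hT : ∀ T' : Matrix (Fin d → Fin n) (Fin d → Fin n) ℚ,
      (∀ k l (σ : Equiv.Perm (Fin d)), T' (k ∘ σ) (l ∘ σ) = T' k l) → T * T' = T' * T) :
    ∃ c : Equiv.Perm (Fin d) → ℚ, ∀ k l, T k l = ∑ σ, c σ * if k ∘ σ = l then 1 else 0 := by
  classical
  let ρ := permRep n d
  let R := MonoidAlgebra ℚ (Equiv.Perm (Fin d))
  let E := ρ.asModule
  let e : E ≃ₗ[ℚ] ((Fin d → Fin n) → ℚ) := ρ.asModuleEquiv
  have : IsSemisimpleModule R E := inferInstance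
  have hφ : ∀ φ : Module.End R E, ∀ v : E,
      e.symm (T.mulVec (e (φ v))) = φ (e.symm (T.mulVec (e v))) := by
    intro φ v
    let ψ : ((Fin d → Fin n) → ℚ) →ₗ[ℚ] ((Fin d → Fin n) → ℚ) :=
      { toFun := fun v => e (φ (e.symm v))
        map_add' := by intro x y; simp
        map_smul' := by
          intro c x
          have h1 : e.symm (c • x) = algebraMap ℚ R c • e.symm x :=
            ρ.asModuleEquiv_symm_map_smul c x
          rw [h1, map_smul]
          change e (algebraMap ℚ R c • _) = _
          have h2 := ρ.asModuleEquiv_symm_map_smul c (e (φ (e.symm x)))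
          change e.symm _ = algebraMap ℚ R c • e.symm (e _) at h2
          rw [LinearEquiv.symm_apply_apply] at h2
          rw [← h2]
          simp }
    have hψρ : ∀ (σ : Equiv.Perm (Fin d)) v, ψ (ρ σ v) = ρ σ (ψ v) := by
      intro σ v
      change e (φ (e.symm (ρ σ v))) = _
      have h1 : e.symm (ρ σ v) = MonoidAlgebra.of ℚ _ σ • e.symm v :=
        ρ.asModuleEquiv_symm_map_rho σ v
      have h2 : e.symm (ρ σ (ψ v)) = MonoidAlgebra.of ℚ _ σ • e.symm (ψ v) :=
        ρ.asModuleEquiv_symm_map_rho σ _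
      apply e.symm.injective
      rw [h2, LinearEquiv.symm_apply_apply, h1]
      have h3 : e.symm (ψ v) = φ (e.symm v) := by simp [ψ]
      rw [h3]
      exact φ.map_smul _ _
    let T' := LinearMap.toMatrix' ψ
    have hT' : ∀ u, T'.mulVec u = ψ u := fun u => by
      rw [LinearMap.toMatrix'_mulVec]
    have hcomm := hT T' (by
      intro k l σ
      have h1 : ∀ k l, T' k l = ψ (Pi.single l 1) k := by
        intro k l
        rw [← hT', Matrix.mulVec_single_one]
        rfl
      rw [h1, h1]
      have h2 : ρ σ (Pi.single (l ∘ σ) 1) = Pi.single l 1 := by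
        funext j
        change (Pi.single (l ∘ σ) 1 : (Fin d → Fin n) → ℚ) (j ∘ σ) = _
        simp only [Pi.single_apply]
        congr 1
        exact propext (σ.surjective.injective_comp_right.eq_iff)
      rw [← h2, hψρ]
      rfl)
    apply e.injective
    rw [LinearEquiv.apply_symm_apply]
    have h3 : e (φ v) = ψ (e v) := by simp [ψ]
    have h4 : e (φ (e.symm (T.mulVec (e v)))) = ψ (T.mulVec (e v)) := rfl
    rw [h3, h4, ← hT', ← hT', Matrix.mulVec_mulVec, Matrix.mulVec_mulVec, hcomm]
  let f : Module.End (Module.End R E) E :=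
    { toFun := fun v => e.symm (T.mulVec (e v))
      map_add' := by intro x y; simp [Matrix.mulVec_add]
      map_smul' := by
        intro φ v
        exact hφ φ v }
  obtain ⟨r, hr⟩ := jacobson_density f
    (Finset.univ.image fun l : Fin d → Fin n => e.symm (Pi.single l 1))
  refine ⟨fun σ => r.coeff σ, fun k l => ?_⟩
  have h1 := hr (e.symm (Pi.single l 1)) (Finset.mem_image_of_mem _ (Finset.mem_univ _))
  have h2 : T.mulVec (Pi.single l 1) = ρ.asAlgebraHom r (Pi.single l 1) := by
    have h3 := congrArg e h1
    have h4 := ρ.asModuleEquiv_map_smul r (e.symm (Pi.single l 1))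
    change e _ = ρ.asAlgebraHom r (e _) at h4
    rw [h4] at h3
    change e (e.symm (T.mulVec (e _))) = _ at h3
    simpa using h3
  have h5 := congrFun h2 k
  rw [Matrix.mulVec_single_one] at h5
  change T k l = _ at h5
  rw [h5, Representation.asAlgebraHom_def, MonoidAlgebra.lift_apply, Finsupp.sum_fintype _ _ (by simp)]
  simp only [LinearMap.sum_apply, Finset.sum_apply, LinearMap.smul_apply, Pi.smul_apply,
    smul_eq_mul]
  refine Finset.sum_congr rfl fun σ _ => ?_
  congr 1
  change (Pi.single l 1 : (Fin d → Fin n) → ℚ) (k ∘ σ) = _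
  simp [Pi.single_apply]

theorem schur_weyl {n d : ℕ} (T : Matrix (Fin d → Fin n) (Fin d → Fin n) ℚ)
    (hT : ∀ g : Matrix.GeneralLinearGroup (Fin n) ℚ, ∀ k l,
      ∑ m, T k m * ∏ s, (g : Matrix (Fin n) (Fin n) ℚ) (m s) (l s) =
      ∑ m, (∏ s, (g : Matrix (Fin n) (Fin n) ℚ) (k s) (m s)) * T m l) :
    ∃ c : Equiv.Perm (Fin d) → ℚ, ∀ k l, T k l = ∑ σ, c σ * if k ∘ σ = l then 1 else 0 := by
  classical
  refine double_comm T fun T' hT' => ?_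
  ext k l
  rw [Matrix.mul_apply, Matrix.mul_apply, ← sub_eq_zero]
  let eq : (Fin d → Fin n × Fin n) ≃ (Fin d → Fin n) × (Fin d → Fin n) :=
    Equiv.arrowProdEquivProdArrow _ _ _
  have hsum : ∀ F : (Fin d → Fin n) → (Fin d → Fin n) → ℚ,
      ∑ x : Fin d → Fin n × Fin n, ((if (fun s => (x s).2) = l then T k (fun s => (x s).1) else 0)
        - (if (fun s => (x s).1) = k then T (fun s => (x s).2) l else 0)) *
        F (fun s => (x s).1) (fun s => (x s).2) =
      ∑ m, T k m * F m l - ∑ m, F k m * T m l := by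
    intro F
    have h0 : ∀ G : (Fin d → Fin n) → (Fin d → Fin n) → ℚ,
        ∑ x : Fin d → Fin n × Fin n, G (fun s => (x s).1) (fun s => (x s).2) =
        ∑ a, ∑ b, G a b := by
      intro G
      rw [← Fintype.sum_prod_type' G]
      exact Fintype.sum_equiv eq _ _ fun x => rfl
    rw [h0 fun a b => ((if b = l then T k a else 0) - (if a = k then T b l else 0)) * F a b]
    simp only [sub_mul, Finset.sum_sub_distrib]
    congr 1
    · refine Finset.sum_congr rfl fun m _ => ?_
      rw [Finset.sum_eq_single l]
      · rw [if_pos rfl]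
      · intro b _ hb; rw [if_neg hb, zero_mul]
      · simp
    · rw [Finset.sum_comm]
      refine Finset.sum_congr rfl fun m _ => ?_
      rw [Finset.sum_eq_single k]
      · rw [if_pos rfl, mul_comm]
      · intro b _ hb; rw [if_neg hb, zero_mul]
      · simp
  rw [← hsum fun a b => T' a b]
  apply polarize _ (fun x => T' (fun s => (x s).1) (fun s => (x s).2))
  · intro g
    have := hsum fun a b => ∏ s, (g : Matrix (Fin n) (Fin n) ℚ) (a s) (b s)
    rw [this, hT, sub_self]
  · intro x σ
    exact hT' (fun s => (x s).1) (fun s => (x s).2) σ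

theorem tmul {F : Type} [CommRing F] {n d : ℕ} (g h : Matrix (Fin n) (Fin n) F) (k a : Fin d → Fin n) :
    ∑ m : Fin d → Fin n, (∏ s, g (k s) (m s)) * ∏ s, h (m s) (a s) =
      ∏ s, (g * h) (k s) (a s) := by
  classical
  simp only [Matrix.mul_apply]
  rw [Finset.prod_univ_sum, Fintype.piFinset_univ]
  simp only [Finset.prod_mul_distrib]

theorem tone {F : Type} [CommRing F] {n d : ℕ} (k a : Fin d → Fin n) :
    ∏ s, (1 : Matrix (Fin n) (Fin n) F) (k s) (a s) = if k = a then 1 else 0 := by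
  classical
  split_ifs with h
  · subst h; simp
  · obtain ⟨s, hs⟩ := Function.ne_iff.mp h
    exact Finset.prod_eq_zero (Finset.mem_univ s) (Matrix.one_apply_ne hs)

/-- The mixed tensor representation. -/
def tRho (n d e : ℕ) : Matrix.GeneralLinearGroup (Fin n) ℚ →*
    Matrix ((Fin d → Fin n) × (Fin e → Fin n)) ((Fin d → Fin n) × (Fin e → Fin n)) ℚ where
  toFun g := Matrix.of fun x y =>
    (∏ s, (((g⁻¹ : Matrix.GeneralLinearGroup (Fin n) ℚ)) : Matrix (Fin n) (Fin n) ℚ) (y.1 s) (x.1 s)) *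
      ∏ s, (g : Matrix (Fin n) (Fin n) ℚ) (x.2 s) (y.2 s)
  map_one' := by
    ext x y
    rw [Matrix.of_apply, inv_one, Units.val_one, tone, tone, Matrix.one_apply]
    obtain ⟨x1, x2⟩ := x
    obtain ⟨y1, y2⟩ := y
    by_cases h1 : x1 = y1
    · by_cases h2 : x2 = y2 <;> simp [h1, h2]
    · simp [h1, Ne.symm h1]
  map_mul' := by
    intro g h
    ext x y
    rw [Matrix.mul_apply, Matrix.of_apply, mul_inv_rev, Units.val_mul, Units.val_mul, ← tmul, ← tmul,
      Finset.sum_mul_sum, Fintype.sum_prod_type]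
    refine Finset.sum_congr rfl fun a _ => Finset.sum_congr rfl fun b _ => ?_
    simp only [Matrix.of_apply]
    ring

theorem tRho_apply (n d e : ℕ) (g : Matrix.GeneralLinearGroup (Fin n) ℚ)
    (x y : (Fin d → Fin n) × (Fin e → Fin n)) : tRho n d e g x y =
    (∏ s, (((g⁻¹ : Matrix.GeneralLinearGroup (Fin n) ℚ)) : Matrix (Fin n) (Fin n) ℚ) (y.1 s) (x.1 s)) *
      ∏ s, (g : Matrix (Fin n) (Fin n) ℚ) (x.2 s) (y.2 s) := rfl

theorem tRho_tr (n : ℕ) (g : Matrix.GeneralLinearGroup (Fin n) ℚ) :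
    ∃ g' : Matrix.GeneralLinearGroup (Fin n) ℚ, ∀ d e,
      tRho n d e g' = (tRho n d e g).transpose := by
  let g' : Matrix.GeneralLinearGroup (Fin n) ℚ :=
    ⟨(g : Matrix (Fin n) (Fin n) ℚ).transpose,
     ((g⁻¹ : Matrix.GeneralLinearGroup (Fin n) ℚ) : Matrix (Fin n) (Fin n) ℚ).transpose,
     by rw [← Matrix.transpose_mul, ← Units.val_mul]; simp,
     by rw [← Matrix.transpose_mul, ← Units.val_mul]; simp⟩
  exact ⟨g', fun d e => rfl⟩

theorem row_ne {n d e : ℕ} (hde : d ≠ e) (r : (Fin d → Fin n) × (Fin e → Fin n) → ℚ)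
    (hr : ∀ g y, ∑ x, r x * tRho n d e g x y = r y) (y) : r y = 0 := by
  classical
  let g : Matrix.GeneralLinearGroup (Fin n) ℚ :=
    ⟨(2 : ℚ) • 1, (2⁻¹ : ℚ) • 1, by simp [smul_smul], by simp [smul_smul]⟩
  have h1 : ∀ x y, tRho n d e g x y = ((2⁻¹) ^ d * 2 ^ e) * (1 : Matrix _ _ ℚ) x y := by
    intro x y
    have h2 : tRho n d e g x y = (∏ s, ((2⁻¹ : ℚ) • (1 : Matrix (Fin n) (Fin n) ℚ)) (y.1 s) (x.1 s)) *
      ∏ s, ((2 : ℚ) • (1 : Matrix (Fin n) (Fin n) ℚ)) (x.2 s) (y.2 s) := rfl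
    rw [h2]
    simp only [Matrix.smul_apply, smul_eq_mul, Finset.prod_mul_distrib, tone, Finset.prod_const,
      Finset.card_univ, Fintype.card_fin]
    rw [Matrix.one_apply]
    obtain ⟨x1, x2⟩ := x
    obtain ⟨y1, y2⟩ := y
    by_cases h1 : x1 = y1
    · by_cases h2 : x2 = y2 <;> simp [h1, h2]
    · simp [h1, Ne.symm h1]
  have h3 := hr g y
  simp only [h1] at h3
  rw [Finset.sum_eq_single y] at h3
  · rw [Matrix.one_apply_eq, mul_one] at h3
    have h4 : r y * ((2⁻¹) ^ d * 2 ^ e - 1) = 0 := by rw [mul_sub, h3]; ring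
    rcases mul_eq_zero.mp h4 with h | h
    · exact h
    · exfalso
      apply hde
      have h5 : (2 : ℚ) ^ e = 2 ^ d := by
        rw [inv_pow] at h
        field_simp at h
        linarith
      exact (pow_right_injective₀ (by norm_num : (0:ℚ) < 2) (by norm_num) h5).symm
  · intro x _ hx; rw [Matrix.one_apply_ne hx]; simp
  · simp

theorem row_eq {n d : ℕ} (r : (Fin d → Fin n) × (Fin d → Fin n) → ℚ)
    (hr : ∀ g y, ∑ x, r x * tRho n d d g x y = r y) :
    ∃ c : Equiv.Perm (Fin d) → ℚ, ∀ k l, r (k, l) = ∑ σ, c σ * if k ∘ σ = l then 1 else 0 := by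
  classical
  apply schur_weyl (T := Matrix.of fun k l => r (k, l))
  intro g k l
  have h1 : ∀ m, r (m, l) = ∑ a, ∑ b, r (a, b) *
      ((∏ s, (((g⁻¹ : Matrix.GeneralLinearGroup (Fin n) ℚ)) : Matrix (Fin n) (Fin n) ℚ) (m s) (a s)) *
      ∏ s, (g : Matrix (Fin n) (Fin n) ℚ) (b s) (l s)) := by
    intro m
    rw [← hr g (m, l), Fintype.sum_prod_type]
    rfl
  simp only [Matrix.of_apply]
  symm
  calc ∑ m : Fin d → Fin n, (∏ s, (g : Matrix (Fin n) (Fin n) ℚ) (k s) (m s)) * r (m, l)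
      = ∑ m : Fin d → Fin n, ∑ a, ∑ b, ((∏ s, (g : Matrix (Fin n) (Fin n) ℚ) (k s) (m s)) *
          (∏ s, (((g⁻¹ : Matrix.GeneralLinearGroup (Fin n) ℚ)) : Matrix (Fin n) (Fin n) ℚ) (m s) (a s))) *
          (r (a, b) * ∏ s, (g : Matrix (Fin n) (Fin n) ℚ) (b s) (l s)) := by
        refine Finset.sum_congr rfl fun m _ => ?_
        rw [h1, Finset.mul_sum]
        refine Finset.sum_congr rfl fun a _ => ?_
        rw [Finset.mul_sum]
        refine Finset.sum_congr rfl fun b _ => ?_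
        ring
    _ = ∑ a, ∑ b, (∑ m : Fin d → Fin n, ((∏ s, (g : Matrix (Fin n) (Fin n) ℚ) (k s) (m s)) *
          (∏ s, (((g⁻¹ : Matrix.GeneralLinearGroup (Fin n) ℚ)) : Matrix (Fin n) (Fin n) ℚ) (m s) (a s)))) *
          (r (a, b) * ∏ s, (g : Matrix (Fin n) (Fin n) ℚ) (b s) (l s)) := by
        rw [Finset.sum_comm]
        refine Finset.sum_congr rfl fun a _ => ?_
        rw [Finset.sum_comm]
        refine Finset.sum_congr rfl fun b _ => ?_
        rw [Finset.sum_mul]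
    _ = ∑ b, r (k, b) * ∏ s, (g : Matrix (Fin n) (Fin n) ℚ) (b s) (l s) := by
        rw [Finset.sum_eq_single k]
        · refine Finset.sum_congr rfl fun b _ => ?_
          rw [tmul, ← Units.val_mul, mul_inv_cancel, Units.val_one, tone, if_pos rfl, one_mul]
        · intro a _ ha
          refine Finset.sum_eq_zero fun b _ => ?_
          rw [tmul, ← Units.val_mul, mul_inv_cancel, Units.val_one, tone, if_neg (Ne.symm ha), zero_mul]
        · simp

section
variable {K : Type} [Field K] [CharZero K] {R : Type} [CommRing R] [Algebra K R]
  {ι₁ ι₂ : Type} {n : ℕ}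

theorem row_mem (A : ι₁ → Fin n → R) (B : Fin n → ι₂ → R) (I : Subalgebra K R)
    (hI : ∀ i j, ∑ k, A i k * B k j ∈ I) (d e : ℕ)
    (r : (Fin d → Fin n) × (Fin e → Fin n) → ℚ)
    (hr : ∀ g y, ∑ x, r x * tRho n d e g x y = r y) (w : Fin d → ι₁) (u : Fin e → ι₂) :
    ∑ y, (r y : K) • ((∏ s, A (w s) (y.1 s)) * ∏ s, B (y.2 s) (u s)) ∈ I := by
  classical
  by_cases hde : d = e
  · subst hde
    obtain ⟨c, hc⟩ := row_eq r hr
    have h1 : ∑ y, (r y : K) • ((∏ s, A (w s) (y.1 s)) * ∏ s, B (y.2 s) (u s)) =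
        ∑ σ, (c σ : K) • ∏ s, ∑ k, A (w s) k * B k (u (σ⁻¹ s)) := by
      rw [Fintype.sum_prod_type]
      have h2 : ∀ k l, (r (k, l) : K) = ∑ σ, (c σ : K) * if k ∘ σ = l then 1 else 0 := by
        intro k l
        rw [hc]; push_cast
        refine Finset.sum_congr rfl fun σ _ => ?_
        split_ifs <;> simp
      simp only [h2, Finset.sum_smul]
      have h3 : ∀ k : Fin d → Fin n, (∑ l : Fin d → Fin n, ∑ σ : Equiv.Perm (Fin d),
          ((c σ : K) * if k ∘ σ = l then 1 else 0) •
            ((∏ s, A (w s) (k s)) * ∏ s, B (l s) (u s))) =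
          ∑ σ : Equiv.Perm (Fin d), (c σ : K) •
            ((∏ s, A (w s) (k s)) * ∏ s, B (k s) (u (σ⁻¹ s))) := by
        intro k
        rw [Finset.sum_comm]
        refine Finset.sum_congr rfl fun σ _ => ?_
        rw [Finset.sum_eq_single (k ∘ σ)]
        · rw [if_pos rfl, mul_one]
          congr 2
          rw [← Equiv.prod_comp σ fun s => B (k s) (u (σ⁻¹ s))]
          simp
        · intro l _ hl
          rw [if_neg (Ne.symm hl)]; simp
        · simp
      rw [Finset.sum_congr rfl fun k _ => h3 k, Finset.sum_comm]
      refine Finset.sum_congr rfl fun σ _ => ?_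
      rw [← Finset.smul_sum, Finset.prod_univ_sum, Fintype.piFinset_univ]
      simp only [Finset.prod_mul_distrib]
    rw [h1]
    exact I.sum_mem fun σ _ => I.smul_mem (I.prod_mem fun s _ => hI _ _) _
  · have h0 := row_ne hde r hr
    simp only [h0, Rat.cast_zero, zero_smul, Finset.sum_const_zero]
    exact I.zero_mem
end

/-- Data for a monomial. -/
structure MonData (ι₁ ι₂ S : Type) (n : ℕ) where
  d : ℕ
  e : ℕ
  c : S
  w : Fin d → ι₁
  k : (Fin d → Fin n) × (Fin e → Fin n)
  u : Fin e → ι₂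

theorem gl_main {K : Type} [Field K] [CharZero K] {Z ι₁ ι₂ σ : Type} {n : ℕ}
    (A : ι₁ → Fin n → Z → K) (B : Fin n → ι₂ → Z → K) (C : σ → Z → K) (f : Z → K)
    (hf : f ∈ Algebra.adjoin K ({a | ∃ i k, a = A i k} ∪ {b | ∃ k j, b = B k j} ∪ Set.range C))
    (hinv : ∀ (g : Matrix.GeneralLinearGroup (Fin n) ℚ) (z : Z), ∃ z' : Z,
      (∀ i k, A i k z' = ∑ m, A i m z *
        (((g⁻¹ : Matrix.GeneralLinearGroup (Fin n) ℚ) : Matrix (Fin n) (Fin n) ℚ) m k : K)) ∧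
      (∀ k j, B k j z' = ∑ m, ((g : Matrix (Fin n) (Fin n) ℚ) k m : K) * B m j z) ∧
      (∀ s, C s z' = C s z) ∧ f z' = f z) :
    f ∈ Algebra.adjoin K ({a | ∃ i j, a = ∑ k, A i k * B k j} ∪ Set.range C) := by
  classical
  let S := Algebra.adjoin K (Set.range C)
  let I := Algebra.adjoin K ({a | ∃ i j, a = ∑ k, A i k * B k j} ∪ Set.range C)
  have hSI : S ≤ I := Algebra.adjoin_mono Set.subset_union_right
  have hAB : ∀ i j, ∑ k, A i k * B k j ∈ I := fun i j =>
    Algebra.subset_adjoin (Or.inl ⟨i, j, rfl⟩)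
  let P : ∀ (m : MonData ι₁ ι₂ S n), ((Fin m.d → Fin n) × (Fin m.e → Fin n)) → Z → K :=
    fun m y => (∏ s, A (m.w s) (y.1 s)) * ∏ s, B (y.2 s) (m.u s)
  let val : MonData ι₁ ι₂ S n → Z → K := fun m => (m.c : Z → K) * P m m.k
  have hspan : f ∈ Submodule.span K (Set.range val) := by
    rw [← Subalgebra.mem_toSubmodule, Algebra.adjoin_eq_span] at hf
    refine Submodule.span_le.mpr ?_ hf
    intro x hx
    apply Submodule.subset_span
    induction hx using Submonoid.closure_induction_left with
    | one => exact ⟨⟨0, 0, 1, Fin.elim0, (Fin.elim0, Fin.elim0), Fin.elim0⟩, by simp [val, P]⟩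
    | mul_left x hx y hy ih =>
      obtain ⟨m, rfl⟩ := ih
      rcases hx with (⟨i, k, rfl⟩ | ⟨k, j, rfl⟩) | ⟨s, rfl⟩
      · refine ⟨⟨m.d + 1, m.e, m.c, Fin.cons i m.w, (Fin.cons k m.k.1, m.k.2), m.u⟩, ?_⟩
        simp only [val, P, Fin.prod_univ_succ, Fin.cons_zero, Fin.cons_succ]
        ring
      · refine ⟨⟨m.d, m.e + 1, m.c, m.w, (m.k.1, Fin.cons k m.k.2), Fin.cons j m.u⟩, ?_⟩
        simp only [val, P, Fin.prod_univ_succ, Fin.cons_zero, Fin.cons_succ]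
        ring
      · refine ⟨⟨m.d, m.e, ⟨C s, Algebra.subset_adjoin ⟨s, rfl⟩⟩ * m.c, m.w, m.k, m.u⟩, ?_⟩
        simp only [val, P, MulMemClass.coe_mul]
        ring
  obtain ⟨a, ha⟩ := (Finsupp.mem_span_range_iff_exists_finsupp).mp hspan
  obtain ⟨c, hc1, hc2⟩ := rey_family (J := a.support)
    (fun m => tRho n m.1.d m.1.e) (by
      intro g
      obtain ⟨g', hg'⟩ := tRho_tr n g
      exact ⟨g', fun m => hg' _ _⟩)
  let r : ∀ m : a.support, (Fin m.1.d → Fin n) × (Fin m.1.e → Fin n) → ℚ :=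
    fun m y => (c.sum fun h q => q • tRho n m.1.d m.1.e h) m.1.k y
  have hr : ∀ m g y, ∑ x, r m x * tRho n m.1.d m.1.e g x y = r m y := by
    intro m g y
    have := congrFun (congrFun (hc2 m g) m.1.k) y
    rw [Matrix.mul_apply] at this
    exact this
  have hrow : ∀ m : a.support, ∑ y, (r m y : K) • P m.1 y ∈ I := fun m =>
    row_mem A B I hAB m.1.d m.1.e (r m) (hr m) m.1.w m.1.u
  have hfz : ∀ z, f z = ∑ m : a.support, a m.1 * ((m.1.c : Z → K) z * P m.1 m.1.k z) := by
    intro z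
    rw [← ha, Finsupp.sum, Finset.sum_apply, ← Finset.sum_coe_sort a.support]
    rfl
  have hcz : ∀ (s : S) (z z' : Z), (∀ t, C t z' = C t z) → (s : Z → K) z' = (s : Z → K) z := by
    intro s z z' h
    obtain ⟨s, hs⟩ := s
    change s z' = s z
    induction hs using Algebra.adjoin_induction with
    | mem x hx => obtain ⟨t, rfl⟩ := hx; exact h t
    | algebraMap q => rfl
    | add x y _ _ h1 h2 => simp [h1, h2]
    | mul x y _ _ h1 h2 => simp [h1, h2]
  have hact : ∀ (g : Matrix.GeneralLinearGroup (Fin n) ℚ) (z : Z),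
      f z = ∑ m : a.support, a m.1 * ((m.1.c : Z → K) z *
        ∑ y, (tRho n m.1.d m.1.e g m.1.k y : K) * P m.1 y z) := by
    intro g z
    obtain ⟨z', hA, hB, hC, hff⟩ := hinv g z
    rw [← hff, hfz]
    refine Finset.sum_congr rfl fun m _ => ?_
    rw [hcz m.1.c z z' hC]
    congr 2
    simp only [P, Pi.mul_apply, Finset.prod_apply, hA, hB]
    rw [Finset.prod_univ_sum, Finset.prod_univ_sum, Fintype.piFinset_univ, Fintype.piFinset_univ,
      Finset.sum_mul_sum, Fintype.sum_prod_type]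
    refine Finset.sum_congr rfl fun k _ => Finset.sum_congr rfl fun l _ => ?_
    rw [tRho_apply]
    push_cast
    simp only [Finset.prod_mul_distrib]
    ring
  have hfinal : f = ∑ m : a.support, a m.1 • ((m.1.c : Z → K) * ∑ y, (r m y : K) • P m.1 y) := by
    funext z
    have h1 : f z = c.sum fun h q => (q : K) * f z := by
      rw [Finsupp.sum, ← Finset.sum_mul, ← Rat.cast_sum]
      change f z = ((c.sum fun _ r => r : ℚ) : K) * f z
      rw [hc1]; simp
    rw [h1, Finsupp.sum, Finset.sum_congr rfl fun g _ => by rw [hact g z, Finset.mul_sum],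
      Finset.sum_comm, Finset.sum_apply]
    refine Finset.sum_congr rfl fun m _ => ?_
    simp only [Pi.smul_apply, Pi.mul_apply, Finset.sum_apply, smul_eq_mul]
    have h2 : ∀ y, (r m y : K) = ∑ g ∈ c.support, (c g : K) * (tRho n m.1.d m.1.e g m.1.k y : K) := by
      intro y
      simp only [r, Finsupp.sum, Matrix.sum_apply, Matrix.smul_apply, smul_eq_mul]
      push_cast; rfl
    simp only [h2, Finset.sum_mul, Finset.mul_sum]
    rw [Finset.sum_comm]
    refine Finset.sum_congr rfl fun y _ => Finset.sum_congr rfl fun g _ => ?_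
    ring
  rw [hfinal]
  exact I.sum_mem fun m _ => I.smul_mem (I.mul_mem (hSI m.1.c.2) (hrow m)) _

section padding
variable {K : Type} [Field K]

/-- Padding matrix. -/
def pP (K : Type) [Field K] (N m : ℕ) : Matrix (Fin N) (Fin m) K :=
  Matrix.of fun r k => if r.1 = k.1 then 1 else 0

/-- Truncated identity. -/
def pE (K : Type) [Field K] (N m : ℕ) : Matrix (Fin N) (Fin N) K :=
  Matrix.diagonal fun r => if r.1 < m then 1 else 0

/-- Zero padding. -/
def pad (N : ℕ) {m n : ℕ} (M : Matrix (Fin m) (Fin n) K) : Matrix (Fin N) (Fin N) K :=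
  pP K N m * M * (pP K N n).transpose

theorem pP_tr_mul {N m : ℕ} (h : m ≤ N) : (pP K N m).transpose * pP K N m = 1 := by
  ext k j
  rw [Matrix.mul_apply, Finset.sum_eq_single (Fin.castLE h k)]
  · simp [pP, Matrix.one_apply, Fin.ext_iff]
  · intro r _ hr
    have : r.1 ≠ k.1 := fun h' => hr (Fin.ext h')
    simp [pP, this]
  · simp

theorem pP_mul_tr {N m : ℕ} : pP K N m * (pP K N m).transpose = pE K N m := by
  ext r s
  rw [Matrix.mul_apply, pE, Matrix.diagonal_apply]
  by_cases h : r.1 < m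
  · rw [Finset.sum_eq_single ⟨r.1, h⟩]
    · simp [pP, h, Fin.ext_iff, eq_comm]
    · intro k _ hk
      have : r.1 ≠ k.1 := fun h' => hk (Fin.ext h'.symm)
      simp [pP, this]
    · simp
  · rw [Finset.sum_eq_zero]
    · simp [h]
    · intro k _
      have : r.1 ≠ k.1 := fun h' => h (h' ▸ k.2)
      simp [pP, this]

theorem pad_mul {N m n p : ℕ} (h : n ≤ N) (A : Matrix (Fin m) (Fin n) K)
    (B : Matrix (Fin n) (Fin p) K) : pad N (A * B) = pad N A * pad N B := by
  have := pP_tr_mul (K := K) h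
  calc pad N (A * B) = pP K N m * A * (1 : Matrix (Fin n) (Fin n) K) * B * (pP K N p).transpose := by
        simp only [pad, Matrix.mul_assoc, Matrix.one_mul]
    _ = pad N A * pad N B := by
        rw [← this]; simp only [pad, Matrix.mul_assoc]

theorem pad_one {N m : ℕ} : pad N (1 : Matrix (Fin m) (Fin m) K) = pE K N m := by
  rw [pad, Matrix.mul_one, pP_mul_tr]

theorem pad_inj {N m n : ℕ} (hm : m ≤ N) (hn : n ≤ N) {A B : Matrix (Fin m) (Fin n) K}
    (h : pad N A = pad N B) : A = B := by
  have h1 : ∀ A : Matrix (Fin m) (Fin n) K, (pP K N m).transpose * pad N A * pP K N n = A := by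
    intro A
    calc _ = ((pP K N m).transpose * pP K N m) * A * ((pP K N n).transpose * pP K N n) := by
          simp only [pad, Matrix.mul_assoc]
      _ = A := by rw [pP_tr_mul hm, pP_tr_mul hn]; simp
  rw [← h1 A, h, h1]

theorem pad_apply {N m n : ℕ} (A : Matrix (Fin m) (Fin n) K) (r s : Fin N) :
    pad N A r s = if h : r.1 < m ∧ s.1 < n then A ⟨r, h.1⟩ ⟨s, h.2⟩ else 0 := by
  rw [pad, Matrix.mul_apply]
  by_cases hs : s.1 < n
  · rw [Finset.sum_eq_single ⟨s.1, hs⟩]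
    · rw [Matrix.mul_apply]
      by_cases hr : r.1 < m
      · rw [Finset.sum_eq_single ⟨r.1, hr⟩]
        · simp [pP, hr, hs]
        · intro k _ hk
          have : r.1 ≠ k.1 := fun h' => hk (Fin.ext h'.symm)
          simp [pP, this]
        · simp
      · rw [Finset.sum_eq_zero]
        · simp [hr]
        · intro k _
          have : r.1 ≠ k.1 := fun h' => hr (h' ▸ k.2)
          simp [pP, this]
    · intro k _ hk
      have : s.1 ≠ k.1 := fun h' => hk (Fin.ext h'.symm)
      simp [pP, this]
    · simp
  · rw [Finset.sum_eq_zero]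
    · simp [hs]
    · intro k _
      have : s.1 ≠ k.1 := fun h' => hs (h' ▸ k.2)
      simp [pP, this]

theorem pE_mul {N m n : ℕ} (h : m ≤ n) : pE K N m * pE K N n = pE K N m := by
  rw [pE, pE, Matrix.diagonal_mul_diagonal]
  congr 1
  funext r
  by_cases h1 : r.1 < m
  · simp [h1, lt_of_lt_of_le h1 h]
  · simp [h1]

theorem pE_mul' {N m n : ℕ} (h : m ≤ n) : pE K N n * pE K N m = pE K N m := by
  rw [← pE_mul h, pE, pE, Matrix.diagonal_mul_diagonal, Matrix.diagonal_mul_diagonal]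
  congr 1
  funext r
  by_cases h1 : r.1 < m
  · simp [h1, lt_of_lt_of_le h1 h]
  · simp [h1]

theorem pE_mul_pad {N m n : ℕ} (h : m ≤ N) (A : Matrix (Fin m) (Fin n) K) :
    pE K N m * pad N A = pad N A := by
  rw [← pad_one, ← pad_mul h, Matrix.one_mul]

theorem pad_mul_pE {N m n : ℕ} (h : n ≤ N) (A : Matrix (Fin m) (Fin n) K) :
    pad N A * pE K N n = pad N A := by
  rw [← pad_one, ← pad_mul h, Matrix.mul_one]

theorem exists_pad {N m n : ℕ} {X : Matrix (Fin N) (Fin N) K}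
    (h : pE K N m * X * pE K N n = X) : ∃ A : Matrix (Fin m) (Fin n) K, pad N A = X := by
  refine ⟨(pP K N m).transpose * X * pP K N n, ?_⟩
  conv_rhs => rw [← h, ← pP_mul_tr, ← pP_mul_tr]
  simp only [pad, Matrix.mul_assoc]

theorem pad_add {N m n : ℕ} (A B : Matrix (Fin m) (Fin n) K) :
    pad N (A + B) = pad N A + pad N B := by
  simp [pad, Matrix.mul_add, Matrix.add_mul]

theorem pad_sub {N m n : ℕ} (A B : Matrix (Fin m) (Fin n) K) :
    pad N (A - B) = pad N A - pad N B := by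
  simp [pad, Matrix.mul_sub, Matrix.sub_mul]

theorem pad_zero {N m n : ℕ} : pad N (0 : Matrix (Fin m) (Fin n) K) = 0 := by
  simp [pad]

theorem pad_smul {N m n : ℕ} (c : K) (A : Matrix (Fin m) (Fin n) K) :
    pad N (c • A) = c • pad N A := by
  simp [pad]

theorem pad_sum {N m n : ℕ} {ι : Type} (s : Finset ι) (A : ι → Matrix (Fin m) (Fin n) K) :
    pad N (∑ i ∈ s, A i) = ∑ i ∈ s, pad N (A i) := by
  simp [pad, Matrix.mul_sum, Matrix.sum_mul]

end padding

namespace FinQuiver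
section
variable (Q : FinQuiver) (K : Type) [Field K] (N : ℕ)

/-- Reverse arrow. -/
def star : Q.DA → Q.DA := Sum.swap

theorem dh_star (a : Q.DA) : Q.dh (Q.star a) = Q.dt a := by cases a <;> rfl
theorem dt_star (a : Q.DA) : Q.dt (Q.star a) = Q.dh a := by cases a <;> rfl

/-- Sign of an arrow. -/
def sg : Q.DA → K := Sum.elim (fun _ => -1) (fun _ => 1)

/-- Moment map on padded representations. -/
def mom (X : Q.DA → Matrix (Fin N) (Fin N) K) (i : Q.I) : Matrix (Fin N) (Fin N) K :=
  ∑ a : Q.DA, if Q.dt a = i then Q.sg K a • (X (Q.star a) * X a) else 0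

/-- Padded representation. -/
def hat (γ : Q.I → ℕ) (x : Q.Rep K γ) : Q.DA → Matrix (Fin N) (Fin N) K :=
  fun a => pad N (x a)

theorem pad_moment (γ : Q.I → ℕ) (hN : ∀ i, γ i ≤ N) (x : Q.Rep K γ) (i : Q.I) :
    pad N (Q.moment K γ x i) = Q.mom K N (Q.hat K N γ x) i := by
  rw [moment, pad_sub, pad_sum, pad_sum, mom, Fintype.sum_sum_type, sub_eq_add_neg, add_comm,
    ← Finset.sum_neg_distrib]
  congr 1
  · refine Finset.sum_congr rfl fun a _ => ?_
    by_cases h : Q.t a = i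
    · subst h
      simp only [dif_pos, if_pos]
      rw [show Q.sg K (Sum.inl a) = -1 from rfl, neg_one_smul]
      exact congrArg _ (pad_mul (hN _) _ _)
    · rw [dif_neg h, if_neg h, pad_zero, neg_zero]
  · refine Finset.sum_congr rfl fun a _ => ?_
    by_cases h : Q.h a = i
    · subst h
      simp only [dif_pos, if_pos]
      rw [show Q.sg K (Sum.inr a) = 1 from rfl, one_smul]
      exact pad_mul (hN _) _ _
    · rw [dif_neg h, if_neg h, pad_zero]

theorem fiber_iff (l : Q.I → K) (γ : Q.I → ℕ) (hN : ∀ i, γ i ≤ N) (x : Q.Rep K γ) :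
    x ∈ Q.MomentFiber K l γ ↔ ∀ i, Q.mom K N (Q.hat K N γ x) i = l i • pE K N (γ i) := by
  refine forall_congr' fun i => ?_
  rw [← Q.pad_moment K N γ hN, ← pad_one, ← pad_smul]
  exact ⟨fun h => by rw [h], fun h => pad_inj (hN i) (hN i) h⟩

theorem hat_act (γ : Q.I → ℕ) (hN : ∀ i, γ i ≤ N) (g : Q.Gl K γ) (x : Q.Rep K γ) (a : Q.DA) :
    Q.hat K N γ (Q.glAct K γ g x) a =
      pad N (g (Q.dh a)).1 * Q.hat K N γ x a * pad N (g (Q.dt a))⁻¹.1 := by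
  rw [hat, glAct, pad_mul (hN _), pad_mul (hN _)]; rfl

theorem ginv_g (γ : Q.I → ℕ) (hN : ∀ i, γ i ≤ N) (g : Q.Gl K γ) (i : Q.I) :
    pad N (g i)⁻¹.1 * pad N (g i).1 = pE K N (γ i) := by
  rw [← pad_mul (hN i), ← Units.val_mul, inv_mul_cancel, Units.val_one, pad_one]

theorem g_ginv (γ : Q.I → ℕ) (hN : ∀ i, γ i ≤ N) (g : Q.Gl K γ) (i : Q.I) :
    pad N (g i).1 * pad N (g i)⁻¹.1 = pE K N (γ i) := by
  rw [← pad_mul (hN i), ← Units.val_mul, mul_inv_cancel, Units.val_one, pad_one]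

theorem hat_pE (γ : Q.I → ℕ) (hN : ∀ i, γ i ≤ N) (x : Q.Rep K γ) (a : Q.DA) :
    Q.hat K N γ x a * pE K N (γ (Q.dt a)) = Q.hat K N γ x a := pad_mul_pE (hN _) _

theorem pE_hat (γ : Q.I → ℕ) (hN : ∀ i, γ i ≤ N) (x : Q.Rep K γ) (a : Q.DA) :
    pE K N (γ (Q.dh a)) * Q.hat K N γ x a = Q.hat K N γ x a := pE_mul_pad (hN _) _

theorem act_mul (γ : Q.I → ℕ) (hN : ∀ i, γ i ≤ N) (g : Q.Gl K γ) (x : Q.Rep K γ) (a b : Q.DA)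
    (h : Q.dt a = Q.dh b) :
    Q.hat K N γ (Q.glAct K γ g x) a * Q.hat K N γ (Q.glAct K γ g x) b =
      pad N (g (Q.dh a)).1 * (Q.hat K N γ x a * Q.hat K N γ x b) * pad N (g (Q.dt b))⁻¹.1 := by
  rw [hat_act _ _ _ _ hN, hat_act _ _ _ _ hN]
  calc _ = pad N (g (Q.dh a)).1 * Q.hat K N γ x a * (pad N (g (Q.dt a))⁻¹.1 *
        pad N (g (Q.dh b)).1) * (Q.hat K N γ x b * pad N (g (Q.dt b))⁻¹.1) := by
        simp only [Matrix.mul_assoc]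
    _ = pad N (g (Q.dh a)).1 * (Q.hat K N γ x a * pE K N (γ (Q.dt a))) *
        (Q.hat K N γ x b * pad N (g (Q.dt b))⁻¹.1) := by
        rw [← h, ginv_g _ _ _ _ hN]; simp only [Matrix.mul_assoc]
    _ = _ := by rw [hat_pE _ _ _ _ hN]; simp only [Matrix.mul_assoc]

theorem act_fiber (l : Q.I → K) (γ : Q.I → ℕ) (hN : ∀ i, γ i ≤ N) (g : Q.Gl K γ) (x : Q.Rep K γ)
    (hx : x ∈ Q.MomentFiber K l γ) : Q.glAct K γ g x ∈ Q.MomentFiber K l γ := by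
  rw [fiber_iff Q K N l γ hN] at hx ⊢
  intro i
  have : Q.mom K N (Q.hat K N γ (Q.glAct K γ g x)) i =
      pad N (g i).1 * Q.mom K N (Q.hat K N γ x) i * pad N (g i)⁻¹.1 := by
    rw [mom, mom, Matrix.mul_sum, Matrix.sum_mul]
    refine Finset.sum_congr rfl fun a _ => ?_
    split_ifs with h
    · subst h
      rw [act_mul _ _ _ _ hN _ _ _ _ (Q.dt_star a), dh_star]
      simp
    · simp
  rw [this, hx i, Matrix.mul_smul, Matrix.smul_mul, ← pad_one, ← pad_mul (hN i), Matrix.mul_one,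
    g_ginv _ _ _ _ hN, pad_one]

variable (i0 : Q.I)

/-- The quotient coordinates. -/
def pr (X : Q.DA → Matrix (Fin N) (Fin N) K) :
    (Q.DA → Q.DA → Matrix (Fin N) (Fin N) K) × (Q.DA → Matrix (Fin N) (Fin N) K) :=
  (fun a b => if Q.dt a = i0 ∧ Q.dh b = i0 then X a * X b else 0,
   fun a => if Q.dh a ≠ i0 ∧ Q.dt a ≠ i0 then X a else 0)

variable {Q K N i0}

theorem pr_ext {X Y : Q.DA → Matrix (Fin N) (Fin N) K}
    (h1 : ∀ a b, Q.dt a = i0 → Q.dh b = i0 → X a * X b = Y a * Y b)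
    (h2 : ∀ a, Q.dh a ≠ i0 → Q.dt a ≠ i0 → X a = Y a) : Q.pr K N i0 X = Q.pr K N i0 Y := by
  unfold pr
  congr 1
  · funext a b
    split_ifs with h
    · exact h1 a b h.1 h.2
    · rfl
  · funext a
    split_ifs with h
    · exact h2 a h.1 h.2
    · rfl

theorem pr_mul {X Y : Q.DA → Matrix (Fin N) (Fin N) K} (h : Q.pr K N i0 X = Q.pr K N i0 Y)
    (a b) (ha : Q.dt a = i0) (hb : Q.dh b = i0) : X a * X b = Y a * Y b := by
  have := congrFun (congrFun (congrArg Prod.fst h) a) b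
  simpa [pr, ha, hb] using this

theorem pr_o {X Y : Q.DA → Matrix (Fin N) (Fin N) K} (h : Q.pr K N i0 X = Q.pr K N i0 Y)
    (a) (ha : Q.dh a ≠ i0) (hb : Q.dt a ≠ i0) : X a = Y a := by
  have := congrFun (congrArg Prod.snd h) a
  simpa [pr, ha, hb] using this

theorem mom_of_pr {X Y : Q.DA → Matrix (Fin N) (Fin N) K} (h : Q.pr K N i0 X = Q.pr K N i0 Y)
    (i) (hi : i ≠ i0) : Q.mom K N X i = Q.mom K N Y i := by
  refine Finset.sum_congr rfl fun a _ => ?_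
  split_ifs with h1
  · by_cases h2 : Q.dh a = i0
    · rw [pr_mul h _ _ ((Q.dt_star a).trans h2) h2]
    · have h3 : Q.dt a ≠ i0 := h1 ▸ hi
      rw [pr_o h a h2 h3, pr_o h (Q.star a) (by rwa [dh_star]) (by rwa [dt_star])]
  · rfl

theorem pr_act {γ δ : Q.I → ℕ} (hγ : ∀ i, γ i ≤ N) (hδ : ∀ i, δ i ≤ N)
    (hlf : ∀ a : Q.DA, Q.dt a = i0 → Q.dh a ≠ i0)
    (g : Q.Gl K γ) (g' : Q.Gl K δ)
    (hg : ∀ j, j ≠ i0 → pad N (g j).1 = pad N (g' j).1 ∧ pad N (g j)⁻¹.1 = pad N (g' j)⁻¹.1)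
    (x : Q.Rep K γ) (y : Q.Rep K δ)
    (h : Q.pr K N i0 (Q.hat K N γ x) = Q.pr K N i0 (Q.hat K N δ y)) :
    Q.pr K N i0 (Q.hat K N γ (Q.glAct K γ g x)) = Q.pr K N i0 (Q.hat K N δ (Q.glAct K δ g' y)) := by
  apply pr_ext
  · intro a b ha hb
    rw [act_mul _ _ _ _ hγ _ _ _ _ (ha.trans hb.symm), act_mul _ _ _ _ hδ _ _ _ _ (ha.trans hb.symm),
      pr_mul h a b ha hb, (hg _ (hlf a ha)).1, (hg (Q.dt b) (fun h' => hlf b h' hb)).2]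
  · intro a ha hb
    rw [hat_act _ _ _ _ hγ, hat_act _ _ _ _ hδ, pr_o h a ha hb, (hg _ ha).1, (hg _ hb).2]

theorem gl_cast {m n : ℕ} (h : m = n) (g : Matrix.GeneralLinearGroup (Fin m) K) :
    ∃ g' : Matrix.GeneralLinearGroup (Fin n) K, pad N g.1 = pad N g'.1 ∧
      pad N g⁻¹.1 = pad N g'⁻¹.1 := by
  subst h; exact ⟨g, rfl, rfl⟩

theorem gl_transfer {γ δ : Q.I → ℕ} (h : ∀ j, j ≠ i0 → γ j = δ j) (g : Q.Gl K γ) :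
    ∃ g' : Q.Gl K δ, ∀ j, j ≠ i0 → pad N (g j).1 = pad N (g' j).1 ∧
      pad N (g j)⁻¹.1 = pad N (g' j)⁻¹.1 := by
  have : ∀ j, ∃ g' : Matrix.GeneralLinearGroup (Fin (δ j)) K, j ≠ i0 → pad N (g j).1 = pad N g'.1 ∧
      pad N (g j)⁻¹.1 = pad N g'⁻¹.1 := by
    intro j
    by_cases hj : j = i0
    · exact ⟨1, fun h' => absurd hj h'⟩
    · obtain ⟨g', hg'⟩ := gl_cast (N := N) (h j hj) (g j)
      exact ⟨g', fun _ => hg'⟩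
  choose g' hg' using this
  exact ⟨g', hg'⟩

end
end FinQuiver

theorem sum_castLE {K : Type} [Field K] {N m : ℕ} (h : m ≤ N) (f : Fin N → K)
    (hf : ∀ r : Fin N, m ≤ r.1 → f r = 0) : ∑ k : Fin m, f (Fin.castLE h k) = ∑ r, f r := by
  refine Fintype.sum_of_injective (Fin.castLE h) (Fin.castLE_injective h) _ _ ?_ fun _ => rfl
  intro r hr
  apply hf
  by_contra hlt
  exact hr ⟨⟨r.1, not_le.mp hlt⟩, Fin.ext rfl⟩

theorem pad_castLE {K : Type} [Field K] {N m n : ℕ} (hm : m ≤ N) (hn : n ≤ N)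
    (A : Matrix (Fin m) (Fin n) K) (r : Fin m) (s : Fin n) :
    pad N A (Fin.castLE hm r) (Fin.castLE hn s) = A r s := by
  rw [pad_apply, dif_pos ⟨r.2, s.2⟩]; rfl

theorem pad_row_zero {K : Type} [Field K] {N m n : ℕ}
    (A : Matrix (Fin m) (Fin n) K) (r s : Fin N) (h : m ≤ r.1) : pad N A r s = 0 := by
  rw [pad_apply, dif_neg]; omega

theorem pad_col_zero {K : Type} [Field K] {N m n : ℕ}
    (A : Matrix (Fin m) (Fin n) K) (r s : Fin N) (h : n ≤ s.1) : pad N A r s = 0 := by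
  rw [pad_apply, dif_neg]; omega

theorem exists_gl_col {K : Type} [Field K] {n : ℕ} (v : Fin n → K) (hv : v ≠ 0) (p : Fin n) :
    ∃ M : Matrix.GeneralLinearGroup (Fin n) K, ∀ r, M.1 r p = v r := by
  obtain ⟨j, hj⟩ := Function.ne_iff.mp hv
  let M0 : Matrix (Fin n) (Fin n) K := ((1 : Matrix (Fin n) (Fin n) K).updateCol j v).submatrix id
    (Equiv.swap j p)
  have hd : M0.det ≠ 0 := by
    rw [Matrix.det_permute', ← Matrix.cramer_apply, Matrix.cramer_one]
    refine mul_ne_zero ?_ hj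
    rcases Int.units_eq_one_or (Equiv.Perm.sign (Equiv.swap j p)) with h | h <;> rw [h] <;> simp
  refine ⟨Matrix.GeneralLinearGroup.mkOfDetNeZero M0 hd, fun r => ?_⟩
  change M0 r p = v r
  simp [M0]

theorem exists_gl_row {K : Type} [Field K] {n : ℕ} (v : Fin n → K) (hv : v ≠ 0) (p : Fin n) :
    ∃ M : Matrix.GeneralLinearGroup (Fin n) K, ∀ r, M.1 p r = v r := by
  obtain ⟨M, hM⟩ := exists_gl_col v hv p
  have hd : M.1.transpose.det ≠ 0 := by
    rw [Matrix.det_transpose]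
    exact ((Matrix.isUnit_iff_isUnit_det _).mp M.isUnit).ne_zero
  exact ⟨Matrix.GeneralLinearGroup.mkOfDetNeZero _ hd, fun r => hM r⟩

theorem exists_ker {K : Type} [Field K] {ι : Type} [Fintype ι] {n : ℕ} (A : Matrix ι (Fin n) K)
    (h : A.rank < n) : ∃ v : Fin n → K, v ≠ 0 ∧ A.mulVec v = 0 := by
  by_contra hc
  push Not at hc
  have hinj : Function.Injective A.mulVecLin := by
    rw [← LinearMap.ker_eq_bot, LinearMap.ker_eq_bot']
    intro m hm
    by_contra hm0
    exact hc m hm0 hm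
  have := LinearMap.finrank_range_of_inj hinj
  rw [Module.finrank_fin_fun] at this
  unfold Matrix.rank at h
  omega

theorem equiv_of_common {K : Type} [Field K] {X Z1 Z2 : Type} (p1 : Z1 → X) (p2 : Z2 → X)
    (R1 : Subalgebra K (Z1 → K)) (R2 : Subalgebra K (Z2 → K))
    (h12 : ∀ z1, ∃ z2, p2 z2 = p1 z1) (h21 : ∀ z2, ∃ z1, p1 z1 = p2 z2)
    (H1 : ∀ f ∈ R1, ∃ h : X → K, f = h ∘ p1 ∧ h ∘ p2 ∈ R2)
    (H2 : ∀ f ∈ R2, ∃ h : X → K, f = h ∘ p2 ∧ h ∘ p1 ∈ R1) : Nonempty (R1 ≃ₐ[K] R2) := by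
  choose t ht using h12
  choose s hs using h21
  have e1 : ∀ f ∈ R1, f ∘ s ∈ R2 := by
    intro f hf
    obtain ⟨h, rfl, h2⟩ := H1 f hf
    convert h2 using 1
    funext z; simp [hs]
  have e2 : ∀ f ∈ R2, f ∘ t ∈ R1 := by
    intro f hf
    obtain ⟨h, rfl, h2⟩ := H2 f hf
    convert h2 using 1
    funext z; simp [ht]
  refine ⟨AlgEquiv.ofAlgHom
    { toFun := fun f => ⟨f.1 ∘ s, e1 _ f.2⟩
      map_one' := rfl
      map_mul' := fun _ _ => rfl
      map_zero' := rfl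
      map_add' := fun _ _ => rfl
      commutes' := fun _ => rfl }
    { toFun := fun f => ⟨f.1 ∘ t, e2 _ f.2⟩
      map_one' := rfl
      map_mul' := fun _ _ => rfl
      map_zero' := rfl
      map_add' := fun _ _ => rfl
      commutes' := fun _ => rfl } ?_ ?_⟩
  · ext f z
    obtain ⟨h, h1, -⟩ := H2 f.1 f.2
    change f.1 (t (s z)) = f.1 z
    rw [h1]; simp [ht, hs]
  · ext f z
    obtain ⟨h, h1, -⟩ := H1 f.1 f.2
    change f.1 (s (t z)) = f.1 z
    rw [h1]; simp [ht, hs]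

namespace FinQuiver
section
variable {Q : FinQuiver} {K : Type} [Field K] {N : ℕ} {i0 : Q.I}

theorem kill {γ : Q.I → ℕ} (hN : ∀ i, γ i ≤ N)
    (hw : (∑ a : Q.DA, if Q.dt a = i0 then γ (Q.dh a) else 0) < 2 * γ i0)
    (l : Q.I → K) (hl : l i0 = 0) (x : Q.Rep K γ) (hx : x ∈ Q.MomentFiber K l γ) :
    (∃ v : Fin (γ i0) → K, v ≠ 0 ∧ ∀ a, Q.dt a = i0 → ∀ r : Fin N,
      ∑ m, Q.hat K N γ x a r (Fin.castLE (hN i0) m) * v m = 0) ∨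
    (∃ v : Fin (γ i0) → K, v ≠ 0 ∧ ∀ b, Q.dh b = i0 → ∀ s : Fin N,
      ∑ m, v m * Q.hat K N γ x b (Fin.castLE (hN i0) m) s = 0) := by
  classical
  rw [fiber_iff Q K N l γ hN] at hx
  let ι := Σ a : {a : Q.DA // Q.dt a = i0}, Fin (γ (Q.dh a.1))
  let A : Matrix ι (Fin (γ i0)) K := Matrix.of fun p m =>
    Q.hat K N γ x p.1.1 (Fin.castLE (hN _) p.2) (Fin.castLE (hN i0) m)
  let B : Matrix (Fin (γ i0)) ι K := Matrix.of fun m p =>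
    Q.sg K p.1.1 * Q.hat K N γ x (Q.star p.1.1) (Fin.castLE (hN i0) m) (Fin.castLE (hN _) p.2)
  have hBA : B * A = 0 := by
    ext m m'
    have h1 := congrFun (congrFun (hx i0) (Fin.castLE (hN i0) m)) (Fin.castLE (hN i0) m')
    rw [hl, zero_smul, mom, ← Finset.sum_filter,
      Finset.sum_subtype _ (p := fun a => Q.dt a = i0) (by simp), Matrix.sum_apply] at h1
    rw [Matrix.mul_apply, Fintype.sum_sigma]
    refine Eq.trans ?_ h1
    refine Finset.sum_congr rfl fun a _ => ?_
    rw [Matrix.smul_apply, Matrix.mul_apply, ← sum_castLE (hN (Q.dh a.1)), smul_eq_mul,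
      Finset.mul_sum]
    · refine Finset.sum_congr rfl fun k _ => ?_
      simp only [A, B, Matrix.of_apply]
      ring
    · intro r hr
      rw [show Q.hat K N γ x a.1 r _ = 0 from pad_row_zero _ _ _ hr, mul_zero]
  have hrk := Matrix.rank_add_rank_le_card_of_mul_eq_zero hBA
  have hcard : Fintype.card ι < 2 * γ i0 := by
    rw [Fintype.card_sigma]
    simp only [Fintype.card_fin]
    rwa [← Finset.sum_filter, Finset.sum_subtype _ (p := fun a => Q.dt a = i0) (by simp)] at hw
  have hsg : ∀ a, Q.sg K a ≠ 0 := by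
    intro a; cases a <;> simp [sg]
  by_cases hA : A.rank < γ i0
  · left
    obtain ⟨v, hv, hv2⟩ := exists_ker A hA
    refine ⟨v, hv, fun a ha r => ?_⟩
    by_cases hr : r.1 < γ (Q.dh a)
    · exact congrFun hv2 ⟨⟨a, ha⟩, ⟨r.1, hr⟩⟩
    · refine Finset.sum_eq_zero fun m _ => ?_
      rw [show Q.hat K N γ x a r _ = 0 from pad_row_zero _ _ _ (not_lt.mp hr), zero_mul]
  · right
    have hB : B.transpose.rank < γ i0 := by
      rw [Matrix.rank_transpose]; omega
    obtain ⟨v, hv, hv2⟩ := exists_ker _ hB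
    refine ⟨v, hv, fun b hb s => ?_⟩
    by_cases hr : s.1 < γ (Q.dt b)
    · have hss : Q.star (Q.star b) = b := by cases b <;> rfl
      have h3 := congrFun hv2 ⟨⟨Q.star b, (Q.dt_star b).trans hb⟩, ⟨s.1, by rwa [dh_star]⟩⟩
      have h4 : Q.sg K (Q.star b) *
          ∑ m, v m * Q.hat K N γ x b (Fin.castLE (hN i0) m) s = 0 := by
        refine Eq.trans ?_ h3
        rw [Finset.mul_sum, Matrix.mulVec, dotProduct]
        refine Finset.sum_congr rfl fun m _ => ?_
        simp only [B, Matrix.transpose_apply, Matrix.of_apply, hss]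
        rw [mul_left_comm, mul_comm]
        rfl
      exact (mul_eq_zero.mp h4).resolve_left (hsg _)
    · refine Finset.sum_eq_zero fun m _ => ?_
      rw [show Q.hat K N γ x b _ s = 0 from pad_col_zero _ _ _ (not_lt.mp hr), mul_zero]

theorem act_one {γ : Q.I → ℕ} (x : Q.Rep K γ) :
    Q.glAct K γ (fun _ => 1) x = x := by
  funext a
  simp [glAct]

/-- Group element concentrated at one vertex. -/
def ins {γ : Q.I → ℕ} (M : Matrix.GeneralLinearGroup (Fin (γ i0)) K) : Q.Gl K γ :=
  Function.update (fun i => (1 : Matrix.GeneralLinearGroup (Fin (γ i)) K)) i0 M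

theorem upd_same {γ : Q.I → ℕ} (M : Matrix.GeneralLinearGroup (Fin (γ i0)) K) (j : Q.I)
    (hj : j = i0) :
    pad N (ins M j).1
      = pad N M.1 ∧
    pad N (ins M j)⁻¹.1
      = pad N M⁻¹.1 := by
  subst hj; simp [ins]

theorem upd_ne {γ : Q.I → ℕ} (M : Matrix.GeneralLinearGroup (Fin (γ i0)) K) (j : Q.I)
    (hj : j ≠ i0) :
    pad N (ins M j).1
      = pE K N (γ j) ∧
    pad N (ins M j)⁻¹.1
      = pE K N (γ j) := by
  rw [ins, Function.update_of_ne hj]; simp [pad_one]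

theorem pr_upd {γ : Q.I → ℕ} (hN : ∀ i, γ i ≤ N)
    (hlf : ∀ a : Q.DA, Q.dt a = i0 → Q.dh a ≠ i0)
    (M : Matrix.GeneralLinearGroup (Fin (γ i0)) K) (x : Q.Rep K γ) :
    Q.pr K N i0 (Q.hat K N γ (Q.glAct K γ (ins M) x)) =
      Q.pr K N i0 (Q.hat K N γ x) := by
  conv_rhs => rw [← act_one x]
  refine pr_act hN hN hlf _ _ ?_ x x rfl
  intro j hj
  have := upd_ne (N := N) M j hj
  rw [this.1, this.2]; simp [pad_one]

theorem trunc {α β : Q.I → ℕ} (hα : ∀ i, α i ≤ N) (hβ : ∀ i, β i ≤ N) (hle : ∀ i, β i ≤ α i)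
    (hne : ∀ j, j ≠ i0 → β j = α j)
    (hlf : ∀ a : Q.DA, Q.dt a = i0 → Q.dh a ≠ i0)
    (l : Q.I → K) (hl : l i0 = 0) (y : Q.Rep K α) (hy : y ∈ Q.MomentFiber K l α)
    (hD : ∀ a b, Q.dt a = i0 → Q.dh b = i0 → Q.hat K N α y a *
      (pE K N (α i0) - pE K N (β i0)) * Q.hat K N α y b = 0) :
    ∃ z ∈ Q.MomentFiber K l β, Q.pr K N i0 (Q.hat K N β z) = Q.pr K N i0 (Q.hat K N α y) := by
  rw [fiber_iff Q K N l α hα] at hy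
  have hz : ∀ a, ∃ A : Matrix (Fin (β (Q.dh a))) (Fin (β (Q.dt a))) K, pad N A =
      pE K N (β (Q.dh a)) * Q.hat K N α y a * pE K N (β (Q.dt a)) := by
    intro a
    apply exists_pad
    calc _ = (pE K N (β (Q.dh a)) * pE K N (β (Q.dh a))) * Q.hat K N α y a *
          (pE K N (β (Q.dt a)) * pE K N (β (Q.dt a))) := by simp only [Matrix.mul_assoc]
      _ = _ := by rw [pE_mul le_rfl, pE_mul le_rfl]
  obtain ⟨z, hz⟩ : ∃ z : Q.Rep K β, ∀ a, pad N (z a) =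
      pE K N (β (Q.dh a)) * Q.hat K N α y a * pE K N (β (Q.dt a)) := by
    choose z hz using hz
    exact ⟨z, hz⟩
  have hz' : ∀ a, Q.hat K N β z a = pE K N (β (Q.dh a)) * Q.hat K N α y a * pE K N (β (Q.dt a)) := hz
  have z1 : ∀ a, Q.dt a ≠ i0 → Q.hat K N β z a = pE K N (β (Q.dh a)) * Q.hat K N α y a := by
    intro a ha
    rw [hz', hne _ ha, Matrix.mul_assoc, hat_pE _ _ _ _ hα]
  have z2 : ∀ a, Q.dh a ≠ i0 → Q.hat K N β z a = Q.hat K N α y a * pE K N (β (Q.dt a)) := by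
    intro a ha
    rw [hz', hne _ ha, pE_hat _ _ _ _ hα]
  have hpr : Q.pr K N i0 (Q.hat K N β z) = Q.pr K N i0 (Q.hat K N α y) := by
    apply pr_ext
    · intro a b ha hb
      have hb' : Q.dt b ≠ i0 := fun h => hlf b h hb
      rw [z2 a (hlf a ha), z1 b hb', ha, hb]
      have h1 := hD a b ha hb
      rw [Matrix.mul_sub, Matrix.sub_mul, sub_eq_zero] at h1
      calc _ = Q.hat K N α y a * (pE K N (β i0) * pE K N (β i0)) * Q.hat K N α y b := by
            simp only [Matrix.mul_assoc]
        _ = _ := by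
            rw [pE_mul le_rfl, ← h1, ← ha, hat_pE _ _ _ _ hα]
    · intro a ha hb
      rw [z1 a hb, hne _ ha, pE_hat _ _ _ _ hα]
  refine ⟨z, ?_, hpr⟩
  rw [fiber_iff Q K N l β hβ]
  intro i
  by_cases hi : i = i0
  · subst hi
    have h1 : Q.mom K N (Q.hat K N β z) i =
        pE K N (β i) * Q.mom K N (Q.hat K N α y) i * pE K N (β i) := by
      rw [mom, mom, Matrix.mul_sum, Matrix.sum_mul]
      refine Finset.sum_congr rfl fun a _ => ?_
      split_ifs with h
      · rw [z1 (Q.star a) (by rw [dt_star]; exact hlf a h), z2 a (hlf a h), dh_star, h]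
        simp only [Matrix.mul_smul, Matrix.smul_mul, Matrix.mul_assoc]
      · simp
    rw [h1, hy, hl]; simp
  · rw [mom_of_pr hpr i hi, hy, hne i hi]

theorem descend {α β : Q.I → ℕ} (hα : ∀ i, α i ≤ N) (hβ : ∀ i, β i ≤ N) (hle : ∀ i, β i ≤ α i)
    (hne : ∀ j, j ≠ i0 → β j = α j) (h0 : α i0 = β i0 + 1)
    (hlf : ∀ a : Q.DA, Q.dt a = i0 → Q.dh a ≠ i0)
    (hw : (∑ a : Q.DA, if Q.dt a = i0 then α (Q.dh a) else 0) < 2 * α i0)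
    (l : Q.I → K) (hl : l i0 = 0) (x : Q.Rep K α) (hx : x ∈ Q.MomentFiber K l α) :
    ∃ z ∈ Q.MomentFiber K l β, Q.pr K N i0 (Q.hat K N β z) = Q.pr K N i0 (Q.hat K N α x) := by
  let p : Fin (α i0) := ⟨β i0, by omega⟩
  have hDd : ∀ s : Fin N, s.1 ≠ β i0 → ((if s.1 < α i0 then 1 else 0 : K) - if s.1 < β i0 then 1 else 0) = 0 := by
    intro s hs
    by_cases h1 : s.1 < β i0
    · simp [h1, show s.1 < α i0 by omega]
    · simp [h1, show ¬ s.1 < α i0 by omega]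
  have hD : pE K N (α i0) - pE K N (β i0) = Matrix.diagonal fun s : Fin N =>
      ((if s.1 < α i0 then 1 else 0 : K) - if s.1 < β i0 then 1 else 0) := by
    rw [pE, pE, Matrix.diagonal_sub]
  rcases kill hα hw l hl x hx with ⟨v, hv, hk⟩ | ⟨v, hv, hk⟩
  · obtain ⟨M, hM⟩ := exists_gl_col v hv p
    have hker : ∀ a, Q.dt a = i0 → Q.hat K N α x a * pad N M.1 *
        (pE K N (α i0) - pE K N (β i0)) = 0 := by
      intro a ha
      ext r s
      rw [hD, Matrix.mul_diagonal, Matrix.mul_apply]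
      by_cases hs : s.1 = β i0
      · rw [← sum_castLE (hα i0)]
        · have hsp : s = Fin.castLE (hα i0) p := Fin.ext hs
          simp only [hsp, pad_castLE, hM]
          rw [hk a ha r]; simp
        · intro k hk'
          rw [pad_row_zero _ _ _ hk', mul_zero]
      · rw [hDd s hs]; simp
    obtain ⟨z, hz, hz2⟩ := trunc hα hβ hle hne hlf l hl
      (Q.glAct K α (ins M⁻¹) x) (Q.act_fiber K N l α hα _ x hx) (by
        intro a b ha hb
        have h1 := (upd_same (N := N) (γ := α) (M⁻¹) (Q.dt a) ha).2
        rw [inv_inv] at h1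
        rw [hat_act _ _ _ _ hα _ _ a, h1]
        have h2 := hker a ha
        rw [Matrix.mul_assoc] at h2
        simp only [Matrix.mul_assoc] at h2 ⊢
        rw [← Matrix.mul_assoc (pad N M.1), ← Matrix.mul_assoc (Q.hat K N α x a), h2]
        simp)
    exact ⟨z, hz, hz2.trans (pr_upd hα hlf _ x)⟩
  · obtain ⟨M, hM⟩ := exists_gl_row v hv p
    have hker : ∀ b, Q.dh b = i0 → (pE K N (α i0) - pE K N (β i0)) * (pad N M.1 *
        Q.hat K N α x b) = 0 := by
      intro b hb
      ext r s
      rw [hD, Matrix.diagonal_mul, Matrix.mul_apply]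
      by_cases hs : r.1 = β i0
      · rw [← sum_castLE (hα i0)]
        · have hsp : r = Fin.castLE (hα i0) p := Fin.ext hs
          simp only [hsp, pad_castLE, hM]
          rw [hk b hb s]; simp
        · intro k hk'
          rw [pad_col_zero _ _ _ hk', zero_mul]
      · rw [hDd r hs]; simp
    obtain ⟨z, hz, hz2⟩ := trunc hα hβ hle hne hlf l hl
      (Q.glAct K α (ins M) x) (Q.act_fiber K N l α hα _ x hx) (by
        intro a b ha hb
        have h1 := (upd_same (N := N) (γ := α) M (Q.dh b) hb).1
        rw [hat_act _ _ _ _ hα _ _ b, h1, Matrix.mul_assoc, ← Matrix.mul_assoc (_ - _), hker b hb]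
        simp)
    exact ⟨z, hz, hz2.trans (pr_upd hα hlf _ x)⟩

theorem ascend {α β : Q.I → ℕ} (hα : ∀ i, α i ≤ N) (hβ : ∀ i, β i ≤ N) (hle : ∀ i, β i ≤ α i)
    (hne : ∀ j, j ≠ i0 → β j = α j)
    (l : Q.I → K) (hl : l i0 = 0) (x : Q.Rep K β) (hx : x ∈ Q.MomentFiber K l β) :
    ∃ z ∈ Q.MomentFiber K l α, Q.pr K N i0 (Q.hat K N α z) = Q.pr K N i0 (Q.hat K N β x) := by
  have hz : ∀ a, ∃ A : Matrix (Fin (α (Q.dh a))) (Fin (α (Q.dt a))) K, pad N A =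
      Q.hat K N β x a := by
    intro a
    apply exists_pad
    rw [← hat_pE _ _ _ _ hβ, ← pE_hat _ _ _ _ hβ]
    calc _ = (pE K N (α (Q.dh a)) * pE K N (β (Q.dh a))) * Q.hat K N β x a *
          (pE K N (β (Q.dt a)) * pE K N (α (Q.dt a))) := by simp only [Matrix.mul_assoc]
      _ = _ := by rw [pE_mul (hle _), pE_mul' (hle _)]
  obtain ⟨z, hz⟩ : ∃ z : Q.Rep K α, ∀ a, pad N (z a) = Q.hat K N β x a := by
    choose z hz using hz
    exact ⟨z, hz⟩
  have hz' : Q.hat K N α z = Q.hat K N β x := funext hz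
  refine ⟨z, ?_, by rw [hz']⟩
  rw [fiber_iff Q K N l β hβ] at hx
  rw [fiber_iff Q K N l α hα, hz']
  intro i
  rw [hx i]
  by_cases hi : i = i0
  · subst hi; rw [hl]; simp
  · rw [hne i hi]

end
end FinQuiver

namespace FinQuiver
section
variable {Q : FinQuiver} {K : Type} [Field K] {N : ℕ} {i0 : Q.I}

/-- Coordinate functions on the quotient coordinates. -/
def coordSet (Q : FinQuiver) (K : Type) [Field K] (N : ℕ) :
    Set ((Q.DA → Q.DA → Matrix (Fin N) (Fin N) K) × (Q.DA → Matrix (Fin N) (Fin N) K) → K) :=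
  {c | ∃ a b r s, c = fun X => X.1 a b r s} ∪ {c | ∃ a r s, c = fun X => X.2 a r s}

/-- Composition as an algebra map. -/
def compHom {X Z : Type} (p : Z → X) : (X → K) →ₐ[K] (Z → K) where
  toFun h := h ∘ p
  map_one' := rfl
  map_mul' _ _ := rfl
  map_zero' := rfl
  map_add' _ _ := rfl
  commutes' _ := rfl

theorem gen [CharZero K] {γ : Q.I → ℕ} (hN : ∀ i, γ i ≤ N)
    (hlf : ∀ a : Q.DA, Q.dt a = i0 → Q.dh a ≠ i0) (l : Q.I → K)
    (f : ↥(Q.MomentFiber K l γ) → K) (hf : f ∈ Q.InvRing K l γ) :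
    ∃ h ∈ Algebra.adjoin K (coordSet Q K N),
      f = h ∘ fun z : ↥(Q.MomentFiber K l γ) => Q.pr K N i0 (Q.hat K N γ z.1) := by
  let A : {a : Q.DA // Q.dt a = i0} × Fin N → Fin (γ i0) → ↥(Q.MomentFiber K l γ) → K :=
    fun p k z => Q.hat K N γ z.1 p.1.1 p.2 (Fin.castLE (hN i0) k)
  let B : Fin (γ i0) → {b : Q.DA // Q.dh b = i0} × Fin N → ↥(Q.MomentFiber K l γ) → K :=
    fun k p z => Q.hat K N γ z.1 p.1.1 (Fin.castLE (hN i0) k) p.2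
  let C : Q.DA × Fin N × Fin N → ↥(Q.MomentFiber K l γ) → K :=
    fun p z => (Q.pr K N i0 (Q.hat K N γ z.1)).2 p.1 p.2.1 p.2.2
  obtain ⟨hf1, hf2⟩ := hf
  have hmain := gl_main A B C f (by
    have hf1' : f ∈ Q.fnRing K γ (Q.MomentFiber K l γ) := hf1
    rw [fnRing, ← Algebra.adjoin_range_eq_range_aeval] at hf1'
    refine Algebra.adjoin_mono ?_ hf1'
    rintro _ ⟨⟨a, r, s⟩, rfl⟩
    have hc : ∀ v : ↥(Q.MomentFiber K l γ), v.1 a r s =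
        Q.hat K N γ v.1 a (Fin.castLE (hN _) r) (Fin.castLE (hN _) s) := fun v =>
      (pad_castLE (hN _) (hN _) _ _ _).symm
    by_cases h1 : Q.dt a = i0
    · exact Or.inl (Or.inl ⟨(⟨a, h1⟩, Fin.castLE (hN _) r), Fin.cast (congrArg γ h1) s,
        funext fun v => hc v⟩)
    · by_cases h2 : Q.dh a = i0
      · exact Or.inl (Or.inr ⟨Fin.cast (congrArg γ h2) r, (⟨a, h2⟩, Fin.castLE (hN _) s),
          funext fun v => hc v⟩)
      · refine Or.inr ⟨(a, Fin.castLE (hN _) r, Fin.castLE (hN _) s), funext fun v => ?_⟩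
        simp only [C, pr, if_pos (And.intro h2 h1)]
        exact (hc v).symm) (by
    intro g z
    let G : Matrix.GeneralLinearGroup (Fin (γ i0)) K :=
      Matrix.GeneralLinearGroup.map (algebraMap ℚ K) g
    have hG : ∀ r s, G.1 r s = ((g.1 r s : ℚ) : K) := fun r s => by
      simp [G]
    have hGi : ∀ r s, G⁻¹.1 r s = ((g⁻¹.1 r s : ℚ) : K) := fun r s => by
      have : G⁻¹ = Matrix.GeneralLinearGroup.map (algebraMap ℚ K) g⁻¹ := by simp [G]
      rw [this]; exact eq_ratCast (algebraMap ℚ K) _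
    refine ⟨⟨Q.glAct K γ (ins G) z.1, Q.act_fiber K N l γ hN _ _ z.2⟩, ?_, ?_, ?_, ?_⟩
    · rintro ⟨⟨a, ha⟩, r⟩ k
      simp only [A]
      rw [hat_act _ _ _ _ hN, (upd_same G (Q.dt a) ha).2, (upd_ne G (Q.dh a) (hlf a ha)).1,
        pE_hat _ _ _ _ hN, Matrix.mul_apply, ← sum_castLE (hN i0)]
      · refine Finset.sum_congr rfl fun m _ => ?_
        rw [pad_castLE, hGi]
      · intro m hm
        rw [pad_row_zero _ _ _ hm, mul_zero]
    · rintro k ⟨⟨b, hb⟩, s⟩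
      simp only [B]
      rw [hat_act _ _ _ _ hN, (upd_same G (Q.dh b) hb).1,
        (upd_ne G (Q.dt b) (fun h => hlf b h hb)).2, Matrix.mul_assoc,
        hat_pE _ _ _ _ hN, Matrix.mul_apply, ← sum_castLE (hN i0)]
      · refine Finset.sum_congr rfl fun m _ => ?_
        rw [pad_castLE, hG]
      · intro m hm
        rw [pad_col_zero _ _ _ hm, zero_mul]
    · rintro ⟨a, r, s⟩
      simp only [C]
      rw [pr_upd hN hlf]
    · exact (hf2 z ⟨Q.glAct K γ (ins G) z.1, Q.act_fiber K N l γ hN _ _ z.2⟩ ⟨ins G, rfl⟩).symm)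
  have hle : Algebra.adjoin K ({a | ∃ i j, a = ∑ k, A i k * B k j} ∪ Set.range C) ≤
      (Algebra.adjoin K (coordSet Q K N)).map (compHom
        fun z : ↥(Q.MomentFiber K l γ) => Q.pr K N i0 (Q.hat K N γ z.1)) := by
    rw [AlgHom.map_adjoin]
    apply Algebra.adjoin_mono
    rintro _ (⟨⟨⟨a, ha⟩, r⟩, ⟨⟨b, hb⟩, s⟩, rfl⟩ | ⟨⟨a, r, s⟩, rfl⟩)
    · refine ⟨_, Or.inl ⟨a, b, r, s, rfl⟩, funext fun z => ?_⟩
      change (Q.pr K N i0 (Q.hat K N γ z.1)).1 a b r s = _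
      simp only [pr, if_pos (And.intro ha hb)]
      rw [Matrix.mul_apply, ← sum_castLE (hN i0), Finset.sum_apply]
      · rfl
      · intro m hm
        rw [show Q.hat K N γ z.1 b m s = 0 from pad_row_zero _ _ _ (by rwa [hb]), mul_zero]
    · exact ⟨_, Or.inr ⟨a, r, s, rfl⟩, rfl⟩
  obtain ⟨h, hh, hh2⟩ := hle hmain
  exact ⟨h, hh, hh2.symm⟩

theorem hat_mem {δ : Q.I → ℕ} (l : Q.I → K) (a : Q.DA) (r s : Fin N) :
    (fun z : ↥(Q.MomentFiber K l δ) => Q.hat K N δ z.1 a r s) ∈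
      Q.fnRing K δ (Q.MomentFiber K l δ) := by
  by_cases h : r.1 < δ (Q.dh a) ∧ s.1 < δ (Q.dt a)
  · refine ⟨MvPolynomial.X (⟨a, ⟨r.1, h.1⟩, ⟨s.1, h.2⟩⟩ : Q.Coords δ), ?_⟩
    funext z
    refine (congrFun (MvPolynomial.aeval_X _ _) z).trans ?_
    rw [hat, pad_apply, dif_pos h]
  · convert Subalgebra.zero_mem _ using 1
    funext z
    rw [hat, pad_apply, dif_neg h]; rfl

theorem poly_mem {δ : Q.I → ℕ} (l : Q.I → K) (h)
    (hh : h ∈ Algebra.adjoin K (coordSet Q K N)) :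
    (h ∘ fun z : ↥(Q.MomentFiber K l δ) => Q.pr K N i0 (Q.hat K N δ z.1)) ∈
      Q.fnRing K δ (Q.MomentFiber K l δ) := by
  have hle : Algebra.adjoin K (coordSet Q K N) ≤ (Q.fnRing K δ (Q.MomentFiber K l δ)).comap (compHom
        fun z : ↥(Q.MomentFiber K l δ) => Q.pr K N i0 (Q.hat K N δ z.1)) := by
    rw [Algebra.adjoin_le_iff]
    rintro _ (⟨a, b, r, s, rfl⟩ | ⟨a, r, s, rfl⟩)
    · change (fun z : ↥(Q.MomentFiber K l δ) => (Q.pr K N i0 (Q.hat K N δ z.1)).1 a b r s) ∈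
        Q.fnRing K δ (Q.MomentFiber K l δ)
      by_cases hab : Q.dt a = i0 ∧ Q.dh b = i0
      · have : (fun z : ↥(Q.MomentFiber K l δ) => (Q.pr K N i0 (Q.hat K N δ z.1)).1 a b r s) =
            ∑ k, (fun z : ↥(Q.MomentFiber K l δ) => Q.hat K N δ z.1 a r k) *
              (fun z : ↥(Q.MomentFiber K l δ) => Q.hat K N δ z.1 b k s) := by
          funext z
          simp only [pr, if_pos hab]
          rw [Matrix.mul_apply, Finset.sum_apply]
          rfl
        rw [this]
        exact Subalgebra.sum_mem _ fun k _ => Subalgebra.mul_mem _ (hat_mem l _ _ _) (hat_mem l _ _ _)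
      · convert Subalgebra.zero_mem _ using 1
        funext z
        simp only [pr, if_neg hab]; rfl
    · change (fun z : ↥(Q.MomentFiber K l δ) => (Q.pr K N i0 (Q.hat K N δ z.1)).2 a r s) ∈
        Q.fnRing K δ (Q.MomentFiber K l δ)
      by_cases hab : Q.dh a ≠ i0 ∧ Q.dt a ≠ i0
      · simp only [pr, if_pos hab]
        exact hat_mem l _ _ _
      · convert Subalgebra.zero_mem _ using 1
        funext z
        simp only [pr, if_neg hab]; rfl
  exact hle hh

theorem transfer [CharZero K] {γ δ : Q.I → ℕ} (hγ : ∀ i, γ i ≤ N) (hδ : ∀ i, δ i ≤ N)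
    (hne : ∀ j, j ≠ i0 → δ j = γ j)
    (hlf : ∀ a : Q.DA, Q.dt a = i0 → Q.dh a ≠ i0) (l : Q.I → K)
    (hsurj : ∀ x ∈ Q.MomentFiber K l δ, ∃ z ∈ Q.MomentFiber K l γ,
      Q.pr K N i0 (Q.hat K N γ z) = Q.pr K N i0 (Q.hat K N δ x))
    (f : ↥(Q.MomentFiber K l γ) → K) (hf : f ∈ Q.InvRing K l γ) :
    ∃ h : _ → K, f = (h ∘ fun z : ↥(Q.MomentFiber K l γ) => Q.pr K N i0 (Q.hat K N γ z.1)) ∧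
      (h ∘ fun z : ↥(Q.MomentFiber K l δ) => Q.pr K N i0 (Q.hat K N δ z.1)) ∈ Q.InvRing K l δ := by
  obtain ⟨h, hh, rfl⟩ := gen hγ hlf l f hf
  refine ⟨h, rfl, poly_mem l h hh, ?_⟩
  rintro ⟨x, hx⟩ ⟨y, hy⟩ ⟨g, hg⟩
  change y = _ at hg
  subst hg
  obtain ⟨z, hz, hz2⟩ := hsurj x hx
  obtain ⟨g', hg'⟩ := gl_transfer (N := N) hne g
  have h1 := pr_act hδ hγ hlf g g' hg' x z hz2.symm
  have h2 := hf.2 ⟨z, hz⟩ ⟨Q.glAct K γ g' z, Q.act_fiber K N l γ hγ _ _ hz⟩ ⟨g', rfl⟩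
  change h (Q.pr K N i0 (Q.hat K N γ z)) = h (Q.pr K N i0 (Q.hat K N γ (Q.glAct K γ g' z))) at h2
  change h (Q.pr K N i0 (Q.hat K N δ x)) = h (Q.pr K N i0 (Q.hat K N δ (Q.glAct K δ g x)))
  rw [h1, ← h2, hz2]

theorem sfactor {α : Q.I → ℕ} (hN : ∀ i, α i ≤ N)
    (hlf : ∀ a : Q.DA, Q.dt a = i0 → Q.dh a ≠ i0)
    (hw : (∑ a : Q.DA, if Q.dt a = i0 then α (Q.dh a) else 0) < 2 * α i0)
    (l : Q.I → K) (hl : l i0 = 0) (x : Q.Rep K α) (hx : x ∈ Q.MomentFiber K l α) :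
    Q.HasSFactor K α i0 x := by
  rcases kill hN hw l hl x hx with ⟨v, hv, hk⟩ | ⟨v, hv, hk⟩
  · refine ⟨fun _ => ⊥, Function.update (fun _ => ⊥) i0 (Submodule.span K {v}), ?_, ?_, ?_, ?_, ?_⟩
    · intro a u hu
      rw [Submodule.mem_bot] at hu ⊢
      rw [hu, Matrix.mulVec_zero]
    · intro a u hu
      suffices h : (x a).mulVec u = 0 by rw [h]; exact Submodule.zero_mem _
      by_cases ha : Q.dt a = i0
      · subst ha
        rw [Function.update_self, Submodule.mem_span_singleton] at hu
        obtain ⟨c, rfl⟩ := hu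
        rw [Matrix.mulVec_smul]
        have : (x a).mulVec v = 0 := by
          funext r
          have h1 := hk a rfl (Fin.castLE (hN _) r)
          refine Eq.trans (b := ∑ m, x a r m * v m) rfl (Eq.trans ?_ h1)
          refine Finset.sum_congr rfl fun m _ => ?_
          rw [hat, pad_castLE]
        rw [this, smul_zero]
      · rw [Function.update_of_ne ha, Submodule.mem_bot] at hu
        rw [hu, Matrix.mulVec_zero]
    · intro i; exact bot_le
    · intro i
      by_cases hi : i = i0
      · subst hi
        rw [Function.update_self, finrank_span_singleton hv]; simp
      · rw [Function.update_of_ne hi]; simp [hi]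
    · intro a h1 h2
      exact absurd h1 (hlf a h2)
  · let φ : (Fin (α i0) → K) →ₗ[K] K :=
      { toFun := fun u => v ⬝ᵥ u
        map_add' := fun _ _ => dotProduct_add _ _ _
        map_smul' := fun c u => dotProduct_smul c _ _ }
    have hφ : φ ≠ 0 := by
      intro h
      apply hv
      funext k
      have := LinearMap.congr_fun h (Pi.single k 1)
      simpa [φ] using this
    refine ⟨Function.update (fun _ => ⊤) i0 (LinearMap.ker φ), fun _ => ⊤, ?_, ?_, ?_, ?_, ?_⟩
    · intro a u hu
      by_cases ha : Q.dh a = i0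
      · subst ha
        rw [Function.update_self, LinearMap.mem_ker]
        change v ⬝ᵥ (x a).mulVec u = 0
        rw [Matrix.dotProduct_mulVec]
        have : Matrix.vecMul v (x a) = 0 := by
          funext s
          have h1 := hk a rfl (Fin.castLE (hN _) s)
          refine Eq.trans (b := ∑ m, v m * x a m s) rfl (Eq.trans ?_ h1)
          refine Finset.sum_congr rfl fun m _ => ?_
          rw [hat, pad_castLE]
        rw [this, zero_dotProduct]
      · rw [Function.update_of_ne ha]; trivial
    · intro a u hu; trivial
    · intro i; exact le_top
    · intro i
      by_cases hi : i = i0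
      · subst hi
        rw [Function.update_self, if_pos rfl, Module.Dual.finrank_ker_add_one_of_ne_zero hφ]
        simp
      · rw [Function.update_of_ne hi]; simp [hi]
    · intro a h1 h2
      exact absurd h1 (hlf a h2)

end
end FinQuiver

/-- if `λ_i = 0` and `(α,ε_i) > 0`, then every `Π^λ`-module of
dimension vector `α` (i.e. every point of `μ_α^{-1}(λ)`) has the simple module
`S_i` as a composition factor, and `N(λ, α − ε_i) ≅ N(λ,α)` as varieties. -/
theorem stmt10 (Q : FinQuiver) (K : Type) [Field K] [CharZero K] [IsAlgClosed K]
    (l : Q.I → K) (α : Q.I → ℕ) (i0 : Q.I)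
    (hl : l i0 = 0) (hpos : 0 < Q.bil (Q.toZ α) (Q.ev i0)) :
    (∀ x ∈ Q.MomentFiber K l α, Q.HasSFactor K α i0 x) ∧
    Nonempty (Q.InvRing K l (fun i => α i - Q.evN i0 i) ≃ₐ[K] Q.InvRing K l α) := by
  classical
  have hw : (∑ a : Q.DA, if Q.dt a = i0 then α (Q.dh a) else 0) < 2 * α i0 := by
    have h1 : Q.bil (Q.toZ α) (Q.ev i0) = 2 * (α i0 : ℤ) -
        ((∑ a : Q.DA, if Q.dt a = i0 then α (Q.dh a) else 0 : ℕ) : ℤ) := by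
      unfold FinQuiver.bil FinQuiver.toZ FinQuiver.ev
      congr 1
      · simp
      · rw [Nat.cast_sum]
        refine Finset.sum_congr rfl fun a _ => ?_
        split_ifs <;> simp
    rw [h1] at hpos
    omega
  have hlf : ∀ a : Q.DA, Q.dt a = i0 → Q.dh a ≠ i0 := by
    intro a ha hb
    have hne : a ≠ Q.star a := by cases a <;> simp [FinQuiver.star]
    have h2 : ∑ b ∈ ({a, Q.star a} : Finset Q.DA), (if Q.dt b = i0 then α (Q.dh b) else 0) ≤
        ∑ b : Q.DA, if Q.dt b = i0 then α (Q.dh b) else 0 :=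
      Finset.sum_le_sum_of_subset (Finset.subset_univ _)
    rw [Finset.sum_pair hne, if_pos ha, if_pos ((Q.dt_star a).trans hb), Q.dh_star, ha, hb] at h2
    omega
  have hα : ∀ i, α i ≤ ∑ j, α j := fun i => Finset.single_le_sum (fun _ _ => Nat.zero_le _)
    (Finset.mem_univ i)
  have hle : ∀ i, α i - Q.evN i0 i ≤ α i := fun i => Nat.sub_le _ _
  have hβ : ∀ i, (fun i => α i - Q.evN i0 i) i ≤ ∑ j, α j := fun i => (hle i).trans (hα i)
  have hne : ∀ j, j ≠ i0 → (fun i => α i - Q.evN i0 i) j = α j := fun j hj => by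
    simp [FinQuiver.evN, hj]
  have h0 : α i0 = (fun i => α i - Q.evN i0 i) i0 + 1 := by
    simp only [FinQuiver.evN, if_pos]
    omega
  refine ⟨fun x hx => FinQuiver.sfactor hα hlf hw l hl x hx, ?_⟩
  have hdesc := fun x hx => FinQuiver.descend hα hβ hle hne h0 hlf hw l hl x hx
  have hasc := fun x hx => FinQuiver.ascend hα hβ hle hne l hl x hx
  refine equiv_of_common
    (fun z : ↥(Q.MomentFiber K l (fun i => α i - Q.evN i0 i)) =>
      Q.pr K (∑ j, α j) i0 (Q.hat K (∑ j, α j) (fun i => α i - Q.evN i0 i) z.1))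
    (fun z : ↥(Q.MomentFiber K l α) => Q.pr K (∑ j, α j) i0 (Q.hat K (∑ j, α j) α z.1))
    _ _ ?_ ?_ ?_ ?_
  · rintro ⟨z, hz⟩
    obtain ⟨y, hy, h⟩ := hasc z hz
    exact ⟨⟨y, hy⟩, h⟩
  · rintro ⟨z, hz⟩
    obtain ⟨y, hy, h⟩ := hdesc z hz
    exact ⟨⟨y, hy⟩, h⟩
  · exact FinQuiver.transfer hβ hα (fun j hj => (hne j hj).symm) hlf l hdesc
  · exact FinQuiver.transfer hα hβ hne hlf l hasc

end
end
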